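/- There exists a constant C(d) depending only on d such that for every p ≥ 1, (1/C(d)) · Σ_{J⊆[d]} Σ_{P∈P(J)} p^{|P|/2} |||A|||_P ≤ ‖S'‖_p ≤ C(d) · Σ_{(P,P')∈P([d])} p^{|P|/2} ‖A‖_{P'|P}. -/

import Mathlib

/-!
All estimates are carried out for a seminorm `q` on real `d`-indexed arrays; the array `A` enters only
through `q z = ‖∑ i, z i • A i‖`. To every block `I ⊆ [d]` belong variables indexed by `[n]^I`, and
`mon X y` is the product array of the block variables `y` over a family `X` of blocks.

*Upper bound.* For a partition into deterministic blocks `X` and Gaussian blocks `L`, let `VV q p X L` be the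
`p`-th moment of `√p ^ |X| * sup_x q (mon X x * mon L g)`. The key estimate (`key_lemma`) treats one Gaussian
block `I₀`: it bounds the moment by the one where `X` becomes Gaussian and `I₀` is averaged out, plus `√p`
times suprema in which some of the blocks of `X` are merged with `I₀` into a deterministic block. For its
proof, let `t` be the functional attaining `q` at `mon X x * mon {I₀} g`. The expansion of
`mon X (y + √p x)` with `y` Gaussian has expectation `√p ^ |X| * mon X x`, also after restriction to a
sign-symmetric event of probability at least `1/2` on which the linear form in `g` given by `t` has an `ℓ²`
norm controlled by the merged suprema (`good_prob`, `good_integral`). So the supremum over `x` is at most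
twice an average over `y + √p x` of a truncated supremum `NN`, which is Lipschitz in `g`
(`key_pointwise`). The shift `√p x` is removed by the Cameron–Martin formula at the cost of a constant
factor after passing to `p`-th moments (`gm_shift_le`, `key_sup`), and the moments of `NN` in `g` are
bounded by Gaussian concentration (`concentration`, `NN_conc`). The key estimate is iterated by induction
on `(|X| + |L|, |L|)` in lexicographic order (`VV_step`, `VV_bound`), which ends in the deterministic and
averaged norms of the theorem. This works for `p ≥ 2`; smaller `p` are compared with `p = 2`.

*Lower bound.* Each deterministic block `I` can be replaced by the product of independent Gaussian variables
over `k ∈ I` at the gain of a factor of order `√p` (`block_lower`). By duality this is a statement on scalar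
chaoses: their first moment dominates the Hilbert–Schmidt norm of the coefficients (`chaos_lower_one`), and
their `p`-th moment dominates `√p` times the first one (`chaos_lower`), because they are Gaussian linear forms
conditionally on all but one of the variables. Replacing all the blocks one after another, conditionally on
the rest, gives `tNorm_le` for each pair `(J, P)`.
-/

open MeasureTheory ProbabilityTheory
open scoped Classical

noncomputable section

def stdGaussian (ι : Type*) [Fintype ι] : Measure (ι → ℝ) :=
  Measure.pi fun _ => gaussianReal 0 1

abbrev GIdx (d n : ℕ) := Σ J : Finset (Fin d), ({l // l ∈ J} → Fin n)

def IsPartition {d : ℕ} (J : Finset (Fin d)) (P : Finset (Finset (Fin d))) : Prop :=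
  (∀ I ∈ P, I.Nonempty) ∧ (∀ I ∈ P, ∀ I' ∈ P, I ≠ I' → Disjoint I I') ∧ P.sup id = J

def IsPartitionPair {d : ℕ} (S : Finset (Fin d)) (P P' : Finset (Finset (Fin d))) : Prop :=
  Disjoint P P' ∧ IsPartition S (P ∪ P')

def partitionsOf {d : ℕ} (J : Finset (Fin d)) : Finset (Finset (Finset (Fin d))) :=
  Finset.univ.filter fun P => IsPartition J P

def partitionPairs (d : ℕ) :
    Finset (Finset (Finset (Fin d)) × Finset (Finset (Fin d))) :=
  Finset.univ.filter fun PP => IsPartitionPair Finset.univ PP.1 PP.2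

def chaosNorm {F : Type*} [NormedAddCommGroup F] [NormedSpace ℝ F] {d n : ℕ}
    (A : (Fin d → Fin n) → F) (P' P : Finset (Finset (Fin d))) : ℝ :=
  sSup { r : ℝ | ∃ x : (I : Finset (Fin d)) → ({l // l ∈ I} → Fin n) → ℝ,
    (∀ I ∈ P, ∑ v : {l // l ∈ I} → Fin n, x I v ^ 2 ≤ 1) ∧
    r = ∫ ω : GIdx d n → ℝ,
        ‖∑ i : Fin d → Fin n,
          ((∏ I ∈ P, x I fun l => i l.1) * ∏ J ∈ P', ω ⟨J, fun l => i l.1⟩) • A i‖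
          ∂ stdGaussian (GIdx d n) }

def tNorm {F : Type*} [NormedAddCommGroup F] [NormedSpace ℝ F] {d n : ℕ}
    (A : (Fin d → Fin n) → F) (J : Finset (Fin d)) (P : Finset (Finset (Fin d))) : ℝ :=
  chaosNorm A ((Finset.univ \ J).image fun l => ({l} : Finset (Fin d))) P

def decChaos {F : Type*} [NormedAddCommGroup F] [NormedSpace ℝ F] {d n : ℕ}
    (A : (Fin d → Fin n) → F) (ω : Fin d × Fin n → ℝ) : F :=
  ∑ i : Fin d → Fin n, (∏ k, ω (k, i k)) • A i

def momP {F : Type*} [NormedAddCommGroup F] [NormedSpace ℝ F] {d n : ℕ}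
    (A : (Fin d → Fin n) → F) (p : ℝ) : ℝ :=
  (∫ ω : Fin d × Fin n → ℝ, ‖decChaos A ω‖ ^ p ∂ stdGaussian (Fin d × Fin n)) ^ (1 / p)

end

section

open scoped ENNReal NNReal Real

/-! ### Standard Gaussian vectors -/

/-- Standard Gaussian measure on `ι → ℝ`; a short name that does not clash with Mathlib's
`ProbabilityTheory.stdGaussian`. -/
noncomputable abbrev 𝔤 (ι : Type*) [Fintype ι] : Measure (ι → ℝ) := _root_.stdGaussian ι

instance instProbGauss (ι : Type*) [Fintype ι] : IsProbabilityMeasure (𝔤 ι) := by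
  unfold 𝔤 _root_.stdGaussian; infer_instance

instance instIsGaussianGauss (ι : Type*) [Fintype ι] : IsGaussian (𝔤 ι) := by
  have h := ProbabilityTheory.map_pi_eq_stdGaussian (ι := ι)
  have h2 : 𝔤 ι = (ProbabilityTheory.stdGaussian (EuclideanSpace ℝ ι)).map
      (EuclideanSpace.equiv ι ℝ : EuclideanSpace ℝ ι →L[ℝ] (ι → ℝ)) := by
    rw [← h, Measure.map_map (by fun_prop) (by fun_prop)]
    have : ((EuclideanSpace.equiv ι ℝ : EuclideanSpace ℝ ι →L[ℝ] (ι → ℝ)) : EuclideanSpace ℝ ι → (ι → ℝ)) ∘ (WithLp.toLp 2) = id := by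
      ext x i; rfl
    rw [this, Measure.map_id]; rfl
  rw [h2]
  infer_instance

lemma gm_integral_id (ι : Type*) [Fintype ι] : ∫ x, id x ∂(𝔤 ι) = 0 := by
  ext i
  have hi : Integrable (id : (ι → ℝ) → (ι → ℝ)) (𝔤 ι) := IsGaussian.integrable_id
  have h1 := (ContinuousLinearMap.proj (R := ℝ) (φ := fun _ : ι => ℝ) i).integral_comp_comm hi
  simp only [ContinuousLinearMap.proj_apply] at h1
  rw [← h1]
  have := integral_comp_eval (μ := fun _ : ι => gaussianReal 0 1) (i := i) (f := fun t : ℝ => t) (by fun_prop)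
  simp only [id]
  unfold 𝔤 _root_.stdGaussian
  rw [this]; simp

lemma gm_rotation (ι : Type*) [Fintype ι] (θ : ℝ) :
    ((𝔤 ι).prod (𝔤 ι)).map (ContinuousLinearMap.rotation θ) = (𝔤 ι).prod (𝔤 ι) :=
  IsGaussian.map_rotation_eq_self (gm_integral_id ι) θ

/-- A linear functional of a standard Gaussian vector is distributed as its `ℓ²` norm times a
standard Gaussian variable. -/
lemma gm_map_linear {ι : Type*} [Fintype ι] (v : ι → ℝ) :
    (𝔤 ι).map (fun ω => ∑ i, v i * ω i) =
      (gaussianReal 0 1).map (fun t => √(∑ i, v i ^ 2) * t) := by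
  let L : (ι → ℝ) →L[ℝ] ℝ := ∑ i, v i • ContinuousLinearMap.proj (R := ℝ) (φ := fun _ : ι => ℝ) i
  have hL : ∀ ω, L ω = ∑ i, v i * ω i := by
    intro ω; simp [L]
  have h := IsGaussian.map_eq_gaussianReal (μ := 𝔤 ι) L
  have e : (L : (ι → ℝ) → ℝ) = fun ω => ∑ i, v i * ω i := funext hL
  rw [gaussianReal_map_const_mul, ← e, h]
  have hm : ∫ ω, L ω ∂(𝔤 ι) = 0 := by
    have := L.integral_comp_comm (μ := 𝔤 ι) (φ := id) IsGaussian.integrable_id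
    simp only [gm_integral_id] at this
    simpa using this
  have hv : Var[L; 𝔤 ι] = ∑ i, v i ^ 2 := by
    rw [e]
    have := variance_sum_pi (μ := fun _ : ι => gaussianReal 0 1) (X := fun i t => v i * t)
      (fun i => (memLp_id_gaussianReal' 2 (by simp)).const_mul (v i))
    have e2 : (fun ω : ι → ℝ => ∑ i, v i * ω i) = ∑ i, fun ω => v i * ω i := by
      ext ω; simp
    rw [e2]
    unfold 𝔤 _root_.stdGaussian
    rw [this]
    congr 1; ext i
    rw [variance_const_mul]
    have : Var[fun t : ℝ => t; gaussianReal 0 1] = 1 := by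
      simp [variance_fun_id_gaussianReal]
    rw [this, mul_one]
  rw [hm, hv]
  congr 1
  · simp
  · ext
    simp [Real.coe_toNNReal _ (Finset.sum_nonneg fun i _ => sq_nonneg (v i)), Real.sq_sqrt (Finset.sum_nonneg fun i _ => sq_nonneg (v i))]

lemma gm_lintegral_linear {ι : Type*} [Fintype ι] (v : ι → ℝ) (f : ℝ → ℝ≥0∞) (hf : Measurable f) :
    ∫⁻ ω, f (∑ i, v i * ω i) ∂(𝔤 ι) = ∫⁻ t, f (√(∑ i, v i ^ 2) * t) ∂(gaussianReal 0 1) := by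
  rw [← lintegral_map (f := f) (g := fun ω : ι → ℝ => ∑ i, v i * ω i) hf (by fun_prop), gm_map_linear,
    lintegral_map hf (by fun_prop)]

/-! ### The Cameron–Martin shift -/

lemma gm_eq_withDensity (ι : Type*) [Fintype ι] :
    𝔤 ι = (volume : Measure (ι → ℝ)).withDensity
      (fun x => ENNReal.ofReal (∏ i, gaussianPDFReal 0 1 (x i))) := by
  unfold 𝔤 _root_.stdGaussian
  refine Measure.pi_eq fun s hs => ?_
  have hms : MeasurableSet (Set.univ.pi s) := MeasurableSet.univ_pi hs
  rw [withDensity_apply _ hms, ← lintegral_indicator hms]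
  have e1 : ∀ x : ι → ℝ, (Set.univ.pi s).indicator
      (fun x => ENNReal.ofReal (∏ i, gaussianPDFReal 0 1 (x i))) x
      = ENNReal.ofReal (∏ i, (s i).indicator (gaussianPDFReal 0 1) (x i)) := by
    intro x
    by_cases hx : x ∈ Set.univ.pi s
    · rw [Set.indicator_of_mem hx]
      congr 1
      refine Finset.prod_congr rfl fun i _ => ?_
      rw [Set.indicator_of_mem (hx i (Set.mem_univ i))]
    · rw [Set.indicator_of_notMem hx]
      simp only [Set.mem_pi, Set.mem_univ, true_implies, not_forall] at hx
      obtain ⟨i, hi⟩ := hx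
      rw [Finset.prod_eq_zero (Finset.mem_univ i) (Set.indicator_of_notMem hi _)]
      simp
  have h_intble : ∀ i, Integrable ((s i).indicator (gaussianPDFReal 0 1)) volume :=
    fun i => (integrable_gaussianPDFReal 0 1).indicator (hs i)
  have hnn : ∀ i t, 0 ≤ (s i).indicator (gaussianPDFReal 0 1) t :=
    fun i t => Set.indicator_nonneg (fun _ _ => gaussianPDFReal_nonneg _ _ _) _
  simp_rw [e1]
  rw [← ofReal_integral_eq_lintegral_ofReal (μ := (volume : Measure (ι → ℝ)))
    (f := fun x => ∏ i, (s i).indicator (gaussianPDFReal 0 1) (x i)) (Integrable.fintype_prod h_intble)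
    (Filter.Eventually.of_forall fun x => Finset.prod_nonneg fun i _ => hnn i _)]
  rw [integral_fintype_prod_volume_eq_prod (f := fun i => (s i).indicator (gaussianPDFReal 0 1)),
    ENNReal.ofReal_prod_of_nonneg (fun i _ => integral_nonneg (hnn i))]
  refine Finset.prod_congr rfl fun i _ => ?_
  rw [gaussianReal_apply_eq_integral _ one_ne_zero, integral_indicator (hs i)]

lemma gm_ac (ι : Type*) [Fintype ι] : 𝔤 ι ≪ (volume : Measure (ι → ℝ)) := by
  rw [gm_eq_withDensity]; exact withDensity_absolutelyContinuous _ _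

lemma measurable_pdfprod (ι : Type*) [Fintype ι] :
    Measurable (fun x : ι → ℝ => ENNReal.ofReal (∏ i, gaussianPDFReal 0 1 (x i))) := by
  have := measurable_gaussianPDFReal 0 1
  refine ENNReal.measurable_ofReal.comp (Finset.measurable_prod _ fun i _ => ?_)
  exact this.comp (measurable_pi_apply i)

/-- Cameron–Martin formula. -/
lemma gm_shift {ι : Type*} [Fintype ι] (h : ι → ℝ) (f : (ι → ℝ) → ℝ≥0∞) (hf : Measurable f) :
    ∫⁻ x, f (x + h) ∂(𝔤 ι) =
      ∫⁻ x, ENNReal.ofReal (Real.exp (∑ i, h i * x i - (∑ i, h i ^ 2) / 2)) * f x ∂(𝔤 ι) := by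
  rw [gm_eq_withDensity, lintegral_withDensity_eq_lintegral_mul _ (measurable_pdfprod ι)
    (by fun_prop), lintegral_withDensity_eq_lintegral_mul _ (measurable_pdfprod ι) (by fun_prop)]
  refine Eq.trans ?_ (lintegral_add_right_eq_self _ h)
  refine lintegral_congr fun x => ?_
  simp only [Pi.mul_apply, Pi.add_apply]
  rw [← mul_assoc, ← ENNReal.ofReal_mul (Finset.prod_nonneg fun i _ => gaussianPDFReal_nonneg _ _ _)]
  congr 2
  have key : Real.exp (∑ i, h i * (x i + h i) - (∑ i, h i ^ 2) / 2)
      = ∏ i, Real.exp (h i * (x i + h i) - h i ^ 2 / 2) := by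
    rw [← Real.exp_sum, Finset.sum_sub_distrib, Finset.sum_div]
  rw [key, ← Finset.prod_mul_distrib]
  refine Finset.prod_congr rfl fun i _ => ?_
  simp only [gaussianPDFReal]
  rw [mul_assoc (√_)⁻¹, ← Real.exp_add]
  congr 2
  simp; ring

lemma gm_exp {ι : Type*} [Fintype ι] (h : ι → ℝ) :
    ∫⁻ x, ENNReal.ofReal (Real.exp (∑ i, h i * x i)) ∂(𝔤 ι) =
      ENNReal.ofReal (Real.exp ((∑ i, h i ^ 2) / 2)) := by
  have h1 := gm_shift h (fun _ => 1) measurable_const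
  simp only [mul_one, lintegral_const, measure_univ] at h1
  have e : ∀ x : ι → ℝ, ENNReal.ofReal (Real.exp (∑ i, h i * x i)) =
      ENNReal.ofReal (Real.exp ((∑ i, h i ^ 2) / 2)) *
      ENNReal.ofReal (Real.exp (∑ i, h i * x i - (∑ i, h i ^ 2) / 2)) := by
    intro x
    rw [← ENNReal.ofReal_mul (Real.exp_pos _).le, ← Real.exp_add]
    congr 2; ring
  simp_rw [e]
  rw [lintegral_const_mul _ (by fun_prop), ← h1, mul_one]

/-- Change of measure at a bounded multiplicative cost when the shift has length at most `√(kp)`. -/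
lemma gm_shift_le {ι : Type*} [Fintype ι] (h : ι → ℝ) (f : (ι → ℝ) → ℝ≥0∞) (hf : Measurable f)
    {p : ℝ} (hp : 2 ≤ p) (k : ℝ) (hk : ∑ i, h i ^ 2 ≤ p * k) (hk0 : 0 ≤ k) :
    ∫⁻ x, f (x + h) ∂(𝔤 ι) ≤
      ENNReal.ofReal (Real.exp k) * (∫⁻ x, f x ^ p ∂(𝔤 ι)) ^ (1 / p) := by
  rw [gm_shift h f hf]
  have hpq : p.HolderConjugate (p / (p - 1)) := Real.HolderConjugate.conjExponent (by linarith)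
  set q := p / (p - 1) with hq
  have hq0 : 0 < q := hpq.symm.pos
  have hq1 : q - 1 = 1 / (p - 1) := by rw [hq]; field_simp [show p - 1 ≠ 0 by linarith]; ring
  have H := ENNReal.lintegral_mul_le_Lp_mul_Lq (𝔤 ι) hpq.symm
    (f := fun x => ENNReal.ofReal (Real.exp (∑ i, h i * x i - (∑ i, h i ^ 2) / 2))) (g := f)
    (Measurable.aemeasurable (by fun_prop)) hf.aemeasurable
  refine H.trans ?_
  gcongr
  set S := ∑ i, h i ^ 2 with hS
  have e : ∀ x : ι → ℝ, ENNReal.ofReal (Real.exp (∑ i, h i * x i - S / 2)) ^ q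
      = ENNReal.ofReal (Real.exp (- q * S / 2)) *
        ENNReal.ofReal (Real.exp (∑ i, (q * h i) * x i)) := by
    intro x
    rw [ENNReal.ofReal_rpow_of_pos (Real.exp_pos _), ← ENNReal.ofReal_mul (Real.exp_pos _).le,
      ← Real.exp_mul, ← Real.exp_add]
    congr 2
    simp_rw [mul_assoc, ← Finset.mul_sum]; ring
  simp_rw [e]
  rw [lintegral_const_mul _ (by fun_prop), gm_exp, ← ENNReal.ofReal_mul (Real.exp_pos _).le,
    ← Real.exp_add, ENNReal.ofReal_rpow_of_pos (Real.exp_pos _), ← Real.exp_mul]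
  refine ENNReal.ofReal_le_ofReal (Real.exp_le_exp.2 ?_)
  have : (-q * S / 2 + (∑ i, (q * h i) ^ 2) / 2) * (1 / q) = (q - 1) * S / 2 := by
    simp_rw [mul_pow, ← Finset.mul_sum, ← hS]; field_simp; ring
  rw [this, hq1]
  have hS0 : 0 ≤ S := Finset.sum_nonneg fun i _ => sq_nonneg _
  rw [one_div_mul_eq_div, div_div, div_le_iff₀ (by linarith)]
  nlinarith

/-! ### Moments of Gaussian linear forms -/

lemma gauss_exp (s : ℝ) :
    ∫⁻ t, ENNReal.ofReal (Real.exp (s * t)) ∂(gaussianReal 0 1) =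
      ENNReal.ofReal (Real.exp (s ^ 2 / 2)) := by
  have h1 := gm_lintegral_linear (ι := Unit) (fun _ => 1)
    (fun t => ENNReal.ofReal (Real.exp (s * t))) (by fun_prop)
  have h2 := gm_exp (ι := Unit) (fun _ => s)
  simp at h1 h2
  rw [← h1, ← h2]

lemma gauss_moment_upper {p : ℝ} (hp : 1 ≤ p) :
    ∫⁻ t, ENNReal.ofReal |t| ^ p ∂(gaussianReal 0 1) ≤ ENNReal.ofReal (4 * √p) ^ p := by
  have hp0 : 0 < p := by linarith
  have hs : 0 < √p := Real.sqrt_pos.2 hp0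
  have key : ∀ t : ℝ, ENNReal.ofReal |t| ^ p ≤ ENNReal.ofReal (√p ^ p) *
      (ENNReal.ofReal (Real.exp (√p * t)) + ENNReal.ofReal (Real.exp (-√p * t))) := by
    intro t
    rw [ENNReal.ofReal_rpow_of_nonneg (abs_nonneg _) hp0.le,
      ← ENNReal.ofReal_add (Real.exp_pos _).le (Real.exp_pos _).le, ← ENNReal.ofReal_mul (by positivity)]
    refine ENNReal.ofReal_le_ofReal ?_
    have h1 : |t| / √p ≤ Real.exp (|t| / √p) := by
      have := Real.add_one_le_exp (|t| / √p); linarith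
    have h2 : (|t| / √p) ^ p ≤ Real.exp (√p * |t|) := by
      calc (|t| / √p) ^ p ≤ (Real.exp (|t| / √p)) ^ p :=
            Real.rpow_le_rpow (by positivity) h1 hp0.le
        _ = Real.exp (√p * |t|) := by
            rw [← Real.exp_mul]; congr 1
            field_simp; rw [Real.sq_sqrt hp0.le]
    have h3 : Real.exp (√p * |t|) ≤ Real.exp (√p * t) + Real.exp (-√p * t) := by
      rcases abs_cases t with ⟨h, _⟩ | ⟨h, _⟩ <;> rw [h]
      · linarith [Real.exp_pos (-√p * t)]
      · have : √p * -t = -√p * t := by ring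
        rw [this]; linarith [Real.exp_pos (√p * t)]
    calc |t| ^ p = √p ^ p * (|t| / √p) ^ p := by
          rw [← Real.mul_rpow hs.le (by positivity)]; congr 1; field_simp
      _ ≤ _ := by gcongr; exact h2.trans h3
  refine (lintegral_mono key).trans ?_
  rw [lintegral_const_mul _ (by fun_prop), lintegral_add_left (by fun_prop), gauss_exp, gauss_exp,
    ← ENNReal.ofReal_add (Real.exp_pos _).le (Real.exp_pos _).le, ← ENNReal.ofReal_mul (by positivity),
    ENNReal.ofReal_rpow_of_nonneg (by positivity) hp0.le]
  refine ENNReal.ofReal_le_ofReal ?_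
  rw [mul_comm 4, Real.mul_rpow hs.le (by norm_num)]
  gcongr
  rw [neg_sq, Real.sq_sqrt hp0.le]
  have h2 : (2 : ℝ) ≤ 2 ^ p := by
    calc (2:ℝ) = 2 ^ (1:ℝ) := by simp
      _ ≤ 2 ^ p := Real.rpow_le_rpow_of_exponent_le (by norm_num) hp
  have h3 : Real.exp (p / 2) ≤ 2 ^ p := by
    rw [Real.rpow_def_of_pos (by norm_num)]
    refine Real.exp_le_exp.2 ?_
    have := Real.log_two_gt_d9
    nlinarith
  have h4 : (4 : ℝ) ^ p = 2 ^ p * 2 ^ p := by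
    rw [← Real.mul_rpow (by norm_num) (by norm_num)]; norm_num
  rw [h4]; nlinarith [Real.exp_pos (p/2)]

lemma gauss_moment_lower {p : ℝ} (hp : 1 ≤ p) :
    ENNReal.ofReal (Real.exp (-3) * √p) ^ p ≤ ∫⁻ t, ENNReal.ofReal |t| ^ p ∂(gaussianReal 0 1) := by
  have hp0 : 0 < p := by linarith
  have hs : 0 < √p := Real.sqrt_pos.2 hp0
  have hsq : √p ^ 2 = p := Real.sq_sqrt hp0.le
  -- only the contribution of the interval `[√p, √p + 1]` is kept
  rw [gaussianReal_of_var_ne_zero _ one_ne_zero,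
    lintegral_withDensity_eq_lintegral_mul _ (measurable_gaussianPDF 0 1) (by fun_prop)]
  have hb : ∀ t ∈ Set.Icc (√p) (√p + 1), ENNReal.ofReal (Real.exp (-3) * √p) ^ p ≤
      (gaussianPDF 0 1 * fun t => ENNReal.ofReal |t| ^ p) t := by
    intro t ht
    simp only [Pi.mul_apply, gaussianPDF]
    rw [ENNReal.ofReal_mul (Real.exp_pos _).le, ENNReal.mul_rpow_of_nonneg _ _ hp0.le]
    gcongr
    · rw [ENNReal.ofReal_rpow_of_pos (Real.exp_pos _)]
      refine ENNReal.ofReal_le_ofReal ?_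
      rw [← Real.exp_mul, gaussianPDFReal]
      have h1 : Real.exp (-1) ≤ (√(2 * π * (1:ℝ≥0)))⁻¹ := by
        rw [Real.exp_neg]
        refine inv_anti₀ (by positivity) ?_
        rw [Real.sqrt_le_left (Real.exp_pos _).le]
        have := Real.exp_one_gt_d9
        have := Real.pi_lt_d2
        rw [NNReal.coe_one, mul_one]
        nlinarith
      have h2 : Real.exp (-p - 1) ≤ Real.exp (-(t - 0) ^ 2 / (2 * (1:ℝ≥0))) := by
        refine Real.exp_le_exp.2 ?_
        simp
        nlinarith [ht.1, ht.2, sq_nonneg (√p - 1)]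
      calc Real.exp (-3 * p) ≤ Real.exp (-1) * Real.exp (-p - 1) := by
            rw [← Real.exp_add]; refine Real.exp_le_exp.2 ?_; linarith
        _ ≤ _ := by gcongr
    · rw [abs_of_nonneg (hs.le.trans ht.1)]; exact ht.1
  calc ENNReal.ofReal (Real.exp (-3) * √p) ^ p
      = ∫⁻ t in Set.Icc (√p) (√p + 1), ENNReal.ofReal (Real.exp (-3) * √p) ^ p := by
        simp [Real.volume_Icc]
    _ ≤ ∫⁻ t in Set.Icc (√p) (√p + 1), (gaussianPDF 0 1 * fun t => ENNReal.ofReal |t| ^ p) t :=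
        setLIntegral_mono' measurableSet_Icc hb
    _ ≤ _ := setLIntegral_le_lintegral _ _

/-- The `p`-th moment of a linear functional of a Gaussian vector, from its `ℓ²` norm. -/
lemma lin_moment {ι : Type*} [Fintype ι] (v : ι → ℝ) {p : ℝ} (hp : 1 ≤ p) :
    ∫⁻ ω, ENNReal.ofReal |∑ i, v i * ω i| ^ p ∂(𝔤 ι) =
      ENNReal.ofReal (√(∑ i, v i ^ 2)) ^ p * ∫⁻ t, ENNReal.ofReal |t| ^ p ∂(gaussianReal 0 1) := by
  rw [gm_lintegral_linear v (fun t => ENNReal.ofReal |t| ^ p) (by fun_prop),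
    ← lintegral_const_mul _ (by fun_prop)]
  refine lintegral_congr fun t => ?_
  rw [abs_mul, abs_of_nonneg (Real.sqrt_nonneg _), ENNReal.ofReal_mul (Real.sqrt_nonneg _),
    ENNReal.mul_rpow_of_nonneg _ _ (by linarith)]

lemma lin_moment_one {ι : Type*} [Fintype ι] (v : ι → ℝ) :
    ∫⁻ ω, ENNReal.ofReal |∑ i, v i * ω i| ∂(𝔤 ι) =
      ENNReal.ofReal (√(∑ i, v i ^ 2)) * ∫⁻ t, ENNReal.ofReal |t| ∂(gaussianReal 0 1) := by
  simpa using lin_moment v le_rfl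

lemma lin_lower_one {ι : Type*} [Fintype ι] (v : ι → ℝ) :
    ENNReal.ofReal (Real.exp (-3)) * ENNReal.ofReal (√(∑ i, v i ^ 2)) ≤
    ∫⁻ ω, ENNReal.ofReal |∑ i, v i * ω i| ∂(𝔤 ι) := by
  rw [lin_moment_one, mul_comm]
  gcongr
  simpa using gauss_moment_lower le_rfl

/-- The `p`-th moment of a Gaussian linear form is at least of the order `√p` times its first moment. -/
lemma lin_lower {ι : Type*} [Fintype ι] (v : ι → ℝ) {p : ℝ} (hp : 1 ≤ p) :
    ENNReal.ofReal (Real.exp (-3) / 4 * √p) ^ p * (∫⁻ ω, ENNReal.ofReal |∑ i, v i * ω i| ∂(𝔤 ι)) ^ p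
    ≤ ∫⁻ ω, ENNReal.ofReal |∑ i, v i * ω i| ^ p ∂(𝔤 ι) := by
  rw [lin_moment v hp, lin_moment_one]
  have h1 : ∫⁻ t, ENNReal.ofReal |t| ∂(gaussianReal 0 1) ≤ 4 := by
    have := gauss_moment_upper le_rfl
    simpa using this
  have h2 := gauss_moment_lower hp
  have hp0 : 0 ≤ p := by linarith
  rw [ENNReal.mul_rpow_of_nonneg _ _ hp0]
  calc ENNReal.ofReal (Real.exp (-3) / 4 * √p) ^ p * (ENNReal.ofReal (√(∑ i, v i ^ 2)) ^ p *
        (∫⁻ t, ENNReal.ofReal |t| ∂(gaussianReal 0 1)) ^ p)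
      ≤ ENNReal.ofReal (Real.exp (-3) / 4 * √p) ^ p * (ENNReal.ofReal (√(∑ i, v i ^ 2)) ^ p *
        4 ^ p) := by gcongr
    _ = ENNReal.ofReal (√(∑ i, v i ^ 2)) ^ p * ENNReal.ofReal (Real.exp (-3) * √p) ^ p := by
        rw [mul_left_comm, ← ENNReal.mul_rpow_of_nonneg _ _ hp0]
        congr 2
        rw [show (4 : ℝ≥0∞) = ENNReal.ofReal 4 by simp, ← ENNReal.ofReal_mul (by positivity)]
        congr 1; ring
    _ ≤ _ := by gcongr

/-! ### Gaussian concentration in moment form -/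

lemma lintegral_rpow_jensen {α : Type*} [MeasurableSpace α] (μ : Measure α) [IsFiniteMeasure μ]
    {f : α → ℝ≥0∞} (hf : AEMeasurable f μ) {p : ℝ} (hp : 1 ≤ p) :
    (∫⁻ a, f a ∂μ) ^ p ≤ μ Set.univ ^ (p - 1) * ∫⁻ a, f a ^ p ∂μ := by
  have h := eLpNorm'_le_eLpNorm'_mul_rpow_measure_univ (μ := μ) (f := f) (p := 1) (q := p)
    one_pos hp hf.aestronglyMeasurable
  have hp0 : 0 < p := by linarith
  simp only [eLpNorm', enorm_eq_self, ENNReal.rpow_one, div_one] at h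
  calc (∫⁻ a, f a ∂μ) ^ p ≤ ((∫⁻ a, f a ^ p ∂μ) ^ (1 / p) * μ Set.univ ^ (1 - 1 / p)) ^ p := by
        gcongr
    _ = _ := by
        rw [ENNReal.mul_rpow_of_nonneg _ _ hp0.le, ← ENNReal.rpow_mul, ← ENNReal.rpow_mul, mul_comm]
        congr 2
        · field_simp
        · field_simp; simp

lemma lintegral_rpow_jensen' {α : Type*} [MeasurableSpace α] (μ : Measure α) [IsProbabilityMeasure μ]
    {f : α → ℝ≥0∞} (hf : AEMeasurable f μ) {p : ℝ} (hp : 1 ≤ p) :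
    (∫⁻ a, f a ∂μ) ^ p ≤ ∫⁻ a, f a ^ p ∂μ := by
  simpa using lintegral_rpow_jensen μ hf hp

section Concentration

variable {ι : Type*} [Fintype ι]

lemma lip_of_l2 {h : (ι → ℝ) → ℝ} {D : ℝ} (hD : 0 ≤ D)
    (hh : ∀ g g', |h g - h g'| ≤ D * √(∑ i, (g i - g' i) ^ 2)) :
    LipschitzWith (Real.toNNReal (D * √(Fintype.card ι))) h := by
  refine LipschitzWith.of_dist_le_mul fun g g' => ?_
  rw [Real.coe_toNNReal _ (by positivity), Real.dist_eq]
  refine (hh g g').trans ?_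
  rw [mul_assoc]
  gcongr
  rw [← Real.sqrt_sq (dist_nonneg (x := g) (y := g')), ← Real.sqrt_mul (by positivity)]
  refine Real.sqrt_le_sqrt ?_
  calc ∑ i, (g i - g' i) ^ 2 ≤ ∑ i : ι, (dist g g') ^ 2 := by
        refine Finset.sum_le_sum fun i _ => ?_
        rw [← sq_abs, ← Real.dist_eq]
        have := dist_le_pi_dist g g' i
        gcongr
    _ = _ := by simp

/-- A function that is `D`-Lipschitz for the Euclidean distance has gradient of `ℓ²` norm at most `D`
(with the convention that `fderiv` vanishes where the function is not differentiable). -/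
lemma fderiv_l2_le {h : (ι → ℝ) → ℝ} {D : ℝ} (hD : 0 ≤ D)
    (hh : ∀ g g', |h g - h g'| ≤ D * √(∑ i, (g i - g' i) ^ 2)) (u : ι → ℝ) :
    √(∑ i, (fderiv ℝ h u (Pi.single i 1)) ^ 2) ≤ D := by
  by_cases hu : DifferentiableAt ℝ h u
  swap
  · simp [fderiv_zero_of_not_differentiableAt hu, hD]
  set L := fderiv ℝ h u with hL
  have hb : ∀ v : ι → ℝ, |L v| ≤ D * √(∑ i, v i ^ 2) := by
    intro v
    have hd : HasDerivAt (fun t : ℝ => h (u + t • v)) (L v) 0 := by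
      have h1 : HasDerivAt (fun t : ℝ => u + t • v) v 0 := by
        simpa using ((hasDerivAt_id (0:ℝ)).smul_const v).const_add u
      have h2 : HasFDerivAt h L (u + (0:ℝ) • v) := by simpa using hu.hasFDerivAt
      exact h2.comp_hasDerivAt (0:ℝ) h1
    have hl : LipschitzWith (Real.toNNReal (D * √(∑ i, v i ^ 2))) (fun t : ℝ => h (u + t • v)) := by
      refine LipschitzWith.of_dist_le_mul fun s t => ?_
      rw [Real.coe_toNNReal _ (by positivity), Real.dist_eq, Real.dist_eq]
      refine (hh _ _).trans (le_of_eq ?_)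
      rw [mul_assoc]; congr 1
      have : ∑ i, ((u + s • v) i - (u + t • v) i) ^ 2 = (∑ i, v i ^ 2) * (s - t) ^ 2 := by
        rw [Finset.sum_mul]; refine Finset.sum_congr rfl fun i _ => ?_
        simp; ring
      rw [this, Real.sqrt_mul (by positivity), Real.sqrt_sq_eq_abs]
    have := norm_deriv_le_of_lipschitz (x₀ := (0:ℝ)) hl
    rw [hd.deriv, Real.coe_toNNReal _ (by positivity)] at this
    simpa using this
  set v : ι → ℝ := fun i => L (Pi.single i 1) with hv
  have h1 : L v = ∑ i, v i ^ 2 := by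
    have : v = ∑ i, v i • (Pi.single i (1:ℝ) : ι → ℝ) := by
      simpa using (pi_eq_sum_univ' v)
    conv_lhs => rw [this]
    rw [map_sum]
    refine Finset.sum_congr rfl fun i _ => ?_
    rw [map_smul, smul_eq_mul, sq]
  have h2 := hb v
  rw [h1, abs_of_nonneg (by positivity)] at h2
  set S := ∑ i, v i ^ 2
  have hS : 0 ≤ S := by positivity
  rcases hS.eq_or_lt with h0 | h0
  · rw [← h0]; simpa using hD
  · have := Real.sqrt_pos.2 h0
    nlinarith [Real.sq_sqrt hS]

lemma fderiv_apply_sum (L : (ι → ℝ) →L[ℝ] ℝ) (v : ι → ℝ) :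
    L v = ∑ i, L (Pi.single i 1) * v i := by
  have : v = ∑ i, v i • (Pi.single i (1:ℝ) : ι → ℝ) := by
    simpa using (pi_eq_sum_univ' v)
  conv_lhs => rw [this]
  rw [map_sum]
  refine Finset.sum_congr rfl fun i _ => ?_
  rw [map_smul, smul_eq_mul, mul_comm]

lemma grad_moment {h : (ι → ℝ) → ℝ} {D : ℝ} (hD : 0 ≤ D)
    (hh : ∀ g g', |h g - h g'| ≤ D * √(∑ i, (g i - g' i) ^ 2)) (u : ι → ℝ) {p : ℝ} (hp : 1 ≤ p) :
    ∫⁻ v, ENNReal.ofReal |fderiv ℝ h u v| ^ p ∂(𝔤 ι) ≤ ENNReal.ofReal (4 * √p * D) ^ p := by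
  rw [lintegral_congr fun v => by rw [fderiv_apply_sum (fderiv ℝ h u) v], lin_moment _ hp]
  have h1 := fderiv_l2_le hD hh u
  have h2 := gauss_moment_upper hp
  rw [ENNReal.ofReal_mul (by positivity), ENNReal.mul_rpow_of_nonneg _ _ (by linarith), mul_comm]
  gcongr

lemma measurable_grad (h : (ι → ℝ) → ℝ) {p : ℝ} :
    Measurable (fun z : (ι → ℝ) × (ι → ℝ) => ENNReal.ofReal |fderiv ℝ h z.1 z.2| ^ p) := by
  have h1 : Measurable (fun z : (ι → ℝ) × (ι → ℝ) => fderiv ℝ h z.1 z.2) := by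
    rw [show (fun z : (ι → ℝ) × (ι → ℝ) => fderiv ℝ h z.1 z.2) = fun z =>
      ∑ i, fderiv ℝ h z.1 (Pi.single i 1) * z.2 i from
      funext fun z => fderiv_apply_sum (fderiv ℝ h z.1) z.2]
    refine Finset.measurable_sum _ fun i _ => ?_
    exact ((measurable_fderiv_apply_const ℝ h _).comp measurable_fst).mul (by fun_prop)
  fun_prop

/-- The curve that rotates `x` into `y`. -/
noncomputable def rotc (z : (ι → ℝ) × (ι → ℝ)) (θ : ℝ) : ι → ℝ :=
  Real.cos θ • z.1 + Real.sin θ • z.2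

lemma rotc_hasDerivAt (z : (ι → ℝ) × (ι → ℝ)) (θ : ℝ) :
    HasDerivAt (rotc z) (-Real.sin θ • z.1 + Real.cos θ • z.2) θ := by
  exact ((Real.hasDerivAt_cos θ).smul_const z.1).add ((Real.hasDerivAt_sin θ).smul_const z.2)

lemma rotc_lip (z : (ι → ℝ) × (ι → ℝ)) :
    LipschitzWith (‖z.1‖₊ + ‖z.2‖₊) (rotc z) := by
  refine lipschitzWith_of_nnnorm_deriv_le (fun θ => (rotc_hasDerivAt z θ).differentiableAt)
    fun θ => ?_
  rw [(rotc_hasDerivAt z θ).deriv]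
  refine (nnnorm_add_le _ _).trans ?_
  rw [nnnorm_smul, nnnorm_smul]
  have h1 : ‖-Real.sin θ‖₊ ≤ 1 := by
    rw [← NNReal.coe_le_coe]; simpa using Real.abs_sin_le_one θ
  have h2 : ‖Real.cos θ‖₊ ≤ 1 := by
    rw [← NNReal.coe_le_coe]; simpa using Real.abs_cos_le_one θ
  calc _ ≤ 1 * ‖z.1‖₊ + 1 * ‖z.2‖₊ := by gcongr
    _ = _ := by simp

lemma diff_le_lintegral {h : (ι → ℝ) → ℝ} {D : ℝ≥0} (hh : LipschitzWith D h)
    (z : (ι → ℝ) × (ι → ℝ)) :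
    ENNReal.ofReal |h z.1 - h z.2| ≤
      ∫⁻ θ in Set.Ioc 0 (π / 2), ENNReal.ofReal |deriv (fun θ => h (rotc z θ)) θ| := by
  have hl : LipschitzWith (D * (‖z.1‖₊ + ‖z.2‖₊)) (fun θ => h (rotc z θ)) :=
    hh.comp (rotc_lip z)
  have hac := (hl.lipschitzOnWith (s := Set.uIcc 0 (π / 2))).absolutelyContinuousOnInterval
  have := hac.integral_deriv_eq_sub
  have e : h z.1 - h z.2 = -∫ θ in Set.Ioc 0 (π / 2), deriv (fun θ => h (rotc z θ)) θ := by
    rw [← intervalIntegral.integral_of_le (by positivity), this]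
    simp [rotc]
  rw [e, abs_neg, ← Real.norm_eq_abs]
  refine (ENNReal.ofReal_le_ofReal (norm_integral_le_lintegral_norm _)).trans ?_
  refine ENNReal.ofReal_toReal_le.trans ?_
  simp [Real.norm_eq_abs]

/-- Moments of `h x - h y` for independent Gaussian `x`, `y`: `h x - h y` is the integral of the derivative
of `h` along the quarter circle from `x` to `y`, and by rotation invariance the point on the circle and
the velocity at that point are again independent standard Gaussian vectors. -/
lemma conc_diff {h : (ι → ℝ) → ℝ} {D : ℝ} (hD : 0 ≤ D)
    (hh : ∀ g g', |h g - h g'| ≤ D * √(∑ i, (g i - g' i) ^ 2)) {p : ℝ} (hp : 1 ≤ p) :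
    ∫⁻ z, ENNReal.ofReal |h z.1 - h z.2| ^ p ∂((𝔤 ι).prod (𝔤 ι)) ≤
      ENNReal.ofReal (8 * √p * D) ^ p := by
  have hlip := lip_of_l2 hD hh
  have hp0 : 0 ≤ p := by linarith
  have hmeas : Measurable (fun w : ((ι → ℝ) × (ι → ℝ)) × ℝ =>
      deriv (fun θ => h (rotc w.1 θ)) w.2) := by
    refine measurable_deriv_with_param (f := fun z θ => h (rotc z θ)) ?_
    refine hlip.continuous.comp ?_
    unfold rotc
    fun_prop
  have hmeas2 : Measurable (fun w : ((ι → ℝ) × (ι → ℝ)) × ℝ =>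
      ENNReal.ofReal |deriv (fun θ => h (rotc w.1 θ)) w.2| ^ p) := by fun_prop
  have hvol : (volume.restrict (Set.Ioc 0 (π / 2))) Set.univ ≤ 2 := by
    simp only [Measure.restrict_apply MeasurableSet.univ, Set.univ_inter, Real.volume_Ioc, sub_zero]
    rw [show (2 : ℝ≥0∞) = ENNReal.ofReal 2 by simp]
    refine ENNReal.ofReal_le_ofReal ?_
    have := Real.pi_le_four; linarith
  have step1 : ∀ z : (ι → ℝ) × (ι → ℝ), ENNReal.ofReal |h z.1 - h z.2| ^ p ≤
      2 ^ (p - 1) * ∫⁻ θ in Set.Ioc 0 (π / 2),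
        ENNReal.ofReal |deriv (fun θ => h (rotc z θ)) θ| ^ p := by
    intro z
    refine (ENNReal.rpow_le_rpow (diff_le_lintegral hlip z) hp0).trans ?_
    have hm : Measurable fun θ => ENNReal.ofReal |deriv (fun θ => h (rotc z θ)) θ| := by
      have := hmeas.comp (measurable_prodMk_left (x := z))
      simp only [Function.comp_def] at this
      fun_prop
    refine (lintegral_rpow_jensen _ hm.aemeasurable hp).trans ?_
    gcongr
  have step2 : ∀ θ : ℝ, ∫⁻ z, ENNReal.ofReal |deriv (fun θ => h (rotc z θ)) θ| ^ p
      ∂((𝔤 ι).prod (𝔤 ι)) ≤ ENNReal.ofReal (4 * √p * D) ^ p := by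
    intro θ
    have hae : ∀ᵐ u ∂(𝔤 ι), DifferentiableAt ℝ h u :=
      (gm_ac ι).ae_le (hlip.ae_differentiableAt)
    have hae2 : ∀ᵐ w ∂((𝔤 ι).prod (𝔤 ι)), DifferentiableAt ℝ h w.1 :=
      Measure.quasiMeasurePreserving_fst.ae hae
    have hrot : ∀ᵐ z ∂((𝔤 ι).prod (𝔤 ι)),
        DifferentiableAt ℝ h (ContinuousLinearMap.rotation θ z).1 := by
      rw [← gm_rotation ι θ] at hae2
      exact ae_of_ae_map (ContinuousLinearMap.continuous _).measurable.aemeasurable hae2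
    calc _ = ∫⁻ z, (fun w : (ι → ℝ) × (ι → ℝ) => ENNReal.ofReal |fderiv ℝ h w.1 w.2| ^ p)
          (ContinuousLinearMap.rotation θ z) ∂((𝔤 ι).prod (𝔤 ι)) := by
          refine lintegral_congr_ae ?_
          filter_upwards [hrot] with z hz
          have : HasDerivAt (fun θ => h (rotc z θ)) (fderiv ℝ h (rotc z θ)
              (-Real.sin θ • z.1 + Real.cos θ • z.2)) θ := by
            refine HasFDerivAt.comp_hasDerivAt (f := rotc z) θ ?_ (rotc_hasDerivAt z θ)
            rw [ContinuousLinearMap.rotation_apply] at hz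
            exact hz.hasFDerivAt
          rw [this.deriv, ContinuousLinearMap.rotation_apply]
          rfl
      _ = ∫⁻ z, ENNReal.ofReal |fderiv ℝ h z.1 z.2| ^ p ∂((𝔤 ι).prod (𝔤 ι)) := by
          conv_rhs => rw [← gm_rotation ι θ]
          rw [lintegral_map (measurable_grad h) (ContinuousLinearMap.continuous _).measurable]
      _ = ∫⁻ u, ∫⁻ v, ENNReal.ofReal |fderiv ℝ h u v| ^ p ∂(𝔤 ι) ∂(𝔤 ι) := by
          rw [lintegral_prod _ (measurable_grad h).aemeasurable]
      _ ≤ ∫⁻ u, ENNReal.ofReal (4 * √p * D) ^ p ∂(𝔤 ι) :=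
          lintegral_mono fun u => grad_moment hD hh u hp
      _ = _ := by simp
  calc _ ≤ ∫⁻ z, 2 ^ (p - 1) * (∫⁻ θ in Set.Ioc 0 (π / 2),
        ENNReal.ofReal |deriv (fun θ => h (rotc z θ)) θ| ^ p) ∂((𝔤 ι).prod (𝔤 ι)) :=
        lintegral_mono step1
    _ = 2 ^ (p - 1) * ∫⁻ θ in Set.Ioc 0 (π / 2), (∫⁻ z,
        ENNReal.ofReal |deriv (fun θ => h (rotc z θ)) θ| ^ p ∂((𝔤 ι).prod (𝔤 ι))) := by
        rw [lintegral_const_mul _ hmeas2.lintegral_prod_right',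
          lintegral_lintegral_swap hmeas2.aemeasurable]
    _ ≤ 2 ^ (p - 1) * ∫⁻ θ in Set.Ioc 0 (π / 2), ENNReal.ofReal (4 * √p * D) ^ p := by
        gcongr with θ; exact step2 θ
    _ ≤ 2 ^ (p - 1) * (ENNReal.ofReal (4 * √p * D) ^ p * 2) := by
        rw [lintegral_const]; gcongr
    _ = _ := by
        have : (2 : ℝ≥0∞) ^ (p - 1) * 2 = 2 ^ p := by
          conv_lhs => rw [show (2:ℝ≥0∞) ^ (p-1) * 2 = 2 ^ (p-1) * 2 ^ (1:ℝ) by simp]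
          rw [← ENNReal.rpow_add _ _ (by simp) (by simp)]; simp
        rw [mul_comm _ (2 : ℝ≥0∞), ← mul_assoc, this, ← ENNReal.mul_rpow_of_nonneg _ _ hp0,
          show (2 : ℝ≥0∞) = ENNReal.ofReal 2 by simp, ← ENNReal.ofReal_mul (by positivity)]
        congr 2; ring

/-- Gaussian concentration for `ℓ²`-Lipschitz functions, in moment form. -/
lemma concentration {h : (ι → ℝ) → ℝ} {D : ℝ} (hD : 0 ≤ D) (h0 : ∀ g, 0 ≤ h g)
    (hh : ∀ g g', |h g - h g'| ≤ D * √(∑ i, (g i - g' i) ^ 2)) {p : ℝ} (hp : 1 ≤ p) :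
    ∫⁻ g, ENNReal.ofReal (h g) ^ p ∂(𝔤 ι) ≤
      16 ^ p * ((∫⁻ g, ENNReal.ofReal (h g) ∂(𝔤 ι)) ^ p + ENNReal.ofReal (√p * D) ^ p) := by
  have hlip := lip_of_l2 hD hh
  have hp0 : 0 ≤ p := by linarith
  have hm : Measurable h := hlip.continuous.measurable
  have hpt : ∀ x, ENNReal.ofReal (h x) ^ p ≤ 2 ^ p * ((∫⁻ g, ENNReal.ofReal (h g) ∂(𝔤 ι)) ^ p +
      ∫⁻ y, ENNReal.ofReal |h x - h y| ^ p ∂(𝔤 ι)) := by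
    intro x
    have h1 : ENNReal.ofReal (h x) ≤ ∫⁻ y, ENNReal.ofReal (h y) ∂(𝔤 ι) +
        ∫⁻ y, ENNReal.ofReal |h x - h y| ∂(𝔤 ι) := by
      rw [← lintegral_add_left (by fun_prop)]
      calc ENNReal.ofReal (h x) = ∫⁻ y, ENNReal.ofReal (h x) ∂(𝔤 ι) := by simp
        _ ≤ _ := by
          refine lintegral_mono fun y => ?_
          rw [← ENNReal.ofReal_add (h0 y) (abs_nonneg _)]
          exact ENNReal.ofReal_le_ofReal (by linarith [le_abs_self (h x - h y)])
    refine (ENNReal.rpow_le_rpow h1 hp0).trans ?_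
    refine (ENNReal.rpow_add_le_mul_rpow_add_rpow _ _ hp).trans ?_
    gcongr
    · norm_num
    · linarith
    · exact lintegral_rpow_jensen' _ (by fun_prop) hp
  refine (lintegral_mono hpt).trans ?_
  have hm2 : Measurable fun z : (ι → ℝ) × (ι → ℝ) => ENNReal.ofReal |h z.1 - h z.2| ^ p := by
    fun_prop
  rw [lintegral_const_mul _ (by have := hm2.lintegral_prod_right' (ν := 𝔤 ι); fun_prop),
    lintegral_add_left (by fun_prop)]
  rw [show (16 : ℝ≥0∞) = 2 * 8 by norm_num, ENNReal.mul_rpow_of_nonneg _ _ hp0, mul_assoc]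
  gcongr
  rw [mul_add]
  gcongr
  · simp only [lintegral_const, measure_univ, mul_one]
    exact le_mul_of_one_le_left zero_le (ENNReal.one_le_rpow (by norm_num) (by linarith))
  · have := conc_diff hD hh hp
    rw [lintegral_prod _ hm2.aemeasurable] at this
    refine this.trans (le_of_eq ?_)
    rw [← ENNReal.mul_rpow_of_nonneg _ _ hp0, show (8 : ℝ≥0∞) = ENNReal.ofReal 8 by simp,
      ← ENNReal.ofReal_mul (by positivity)]
    congr 2; ring

end Concentration

/-! ### Resampling and sign changes of coordinates -/

/-- Takes the coordinates in `S` from `x` and the other ones from `y`. -/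
noncomputable def splice {ι : Type*} (S : Set ι) (x y : ι → ℝ) : ι → ℝ := fun i => if i ∈ S then x i else y i

lemma measurable_splice {ι : Type*} (S : Set ι) :
    Measurable (fun z : (ι → ℝ) × (ι → ℝ) => splice S z.1 z.2) := by
  refine measurable_pi_lambda _ fun i => ?_
  unfold splice
  by_cases h : i ∈ S <;> simp only [h, if_true, if_false] <;> fun_prop

lemma continuous_splice {ι : Type*} (S : Set ι) :
    Continuous (fun z : (ι → ℝ) × (ι → ℝ) => splice S z.1 z.2) := by
  refine continuous_pi fun i => ?_
  unfold splice
  by_cases h : i ∈ S <;> simp only [h, if_true, if_false] <;> fun_prop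

lemma gm_map_splice {ι : Type*} [Fintype ι] (S : Set ι) :
    ((𝔤 ι).prod (𝔤 ι)).map (fun z => splice S z.1 z.2) = 𝔤 ι := by
  symm
  conv_lhs => unfold 𝔤 _root_.stdGaussian
  refine Measure.pi_eq fun s hs => ?_
  rw [Measure.map_apply (measurable_splice S) (MeasurableSet.univ_pi hs)]
  have : (fun z : (ι → ℝ) × (ι → ℝ) => splice S z.1 z.2) ⁻¹' Set.univ.pi s =
      (Set.univ.pi fun i => if i ∈ S then s i else Set.univ) ×ˢ
      (Set.univ.pi fun i => if i ∈ S then Set.univ else s i) := by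
    ext z
    simp only [Set.mem_preimage, Set.mem_pi, Set.mem_univ, true_implies, Set.mem_prod, splice]
    rw [← forall_and]
    refine forall_congr' fun i => ?_
    by_cases h : i ∈ S <;> simp [h]
  rw [this, Measure.prod_prod]
  unfold 𝔤 _root_.stdGaussian
  rw [Measure.pi_pi, Measure.pi_pi, ← Finset.prod_mul_distrib]
  refine Finset.prod_congr rfl fun i _ => ?_
  by_cases h : i ∈ S <;> simp [h]

/-- Resampling the coordinates outside `S` does not change the law of a standard Gaussian vector. -/
lemma gm_splice {ι : Type*} [Fintype ι] (S : Set ι) {f : (ι → ℝ) → ℝ≥0∞} (hf : Measurable f) :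
    ∫⁻ x, ∫⁻ y, f (splice S x y) ∂(𝔤 ι) ∂(𝔤 ι) = ∫⁻ ω, f ω ∂(𝔤 ι) := by
  conv_rhs => rw [← gm_map_splice S]
  rw [lintegral_map hf (measurable_splice S)]
  exact (lintegral_prod _ (hf.comp (measurable_splice S)).aemeasurable).symm

lemma gm_map_coord {α β : Type*} [Fintype α] [Fintype β] {e : α → β} (he : Function.Injective e) :
    (𝔤 β).map (fun ω a => ω (e a)) = 𝔤 α := by
  have hind : iIndepFun (fun (b : β) (ω : β → ℝ) => ω b) (𝔤 β) := by
    have := iIndepFun_pi (μ := fun _ : β => gaussianReal 0 1) (X := fun _ t => t)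
      (fun i => by fun_prop)
    exact this
  have h2 := hind.precomp he
  rw [iIndepFun_iff_map_fun_eq_pi_map (fun i => (measurable_pi_apply (e i)).aemeasurable)] at h2
  rw [h2]
  unfold 𝔤 _root_.stdGaussian
  congr 1; funext a
  have := (measurePreserving_eval (μ := fun _ : β => gaussianReal 0 1) (e a)).map_eq
  exact this

/-- A subfamily of the coordinates of a standard Gaussian vector is a standard Gaussian vector. -/
lemma gm_coord {α β : Type*} [Fintype α] [Fintype β] {e : α → β} (he : Function.Injective e)
    {f : (α → ℝ) → ℝ≥0∞} (hf : Measurable f) :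
    ∫⁻ ω, f (fun a => ω (e a)) ∂(𝔤 β) = ∫⁻ ω, f ω ∂(𝔤 α) := by
  rw [← gm_map_coord he, lintegral_map hf (by fun_prop)]

/-- Sign change of the coordinates in `S`. -/
noncomputable def flip' {ι : Type*} (S : Set ι) (x : ι → ℝ) : ι → ℝ := fun i => if i ∈ S then - x i else x i

lemma measurable_flip {ι : Type*} (S : Set ι) : Measurable (flip' S) := by
  refine measurable_pi_lambda _ fun i => ?_
  unfold flip'
  by_cases h : i ∈ S <;> simp only [h, if_true, if_false] <;> fun_prop

lemma gm_flip {ι : Type*} [Fintype ι] (S : Set ι) : (𝔤 ι).map (flip' S) = 𝔤 ι := by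
  have : flip' S = fun x i => (if i ∈ S then (fun t : ℝ => -t) else fun t => t) (x i) := by
    ext x i; unfold flip'; by_cases h : i ∈ S <;> simp [h]
  rw [this]
  unfold 𝔤 _root_.stdGaussian
  have h2 : ∀ i, Measure.map (if i ∈ S then (fun t : ℝ => -t) else fun t => t) (gaussianReal 0 1)
      = gaussianReal 0 1 := by
    intro i
    by_cases h : i ∈ S
    · simp only [h, if_true]; rw [gaussianReal_map_neg]; simp
    · simp only [h, if_false]; exact Measure.map_id
  have : ∀ i, SigmaFinite (Measure.map (if i ∈ S then (fun t : ℝ => -t) else fun t => t) (gaussianReal 0 1)) := by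
    intro i; rw [h2]; infer_instance
  rw [Measure.pi_map_pi]
  · congr 1; funext i; exact h2 i
  · intro i; by_cases h : i ∈ S <;> simp only [h, if_true, if_false] <;> fun_prop

lemma gm_integral_flip {ι : Type*} [Fintype ι] (S : Set ι) (f : (ι → ℝ) → ℝ) (hf : Measurable f) :
    ∫ x, f (flip' S x) ∂(𝔤 ι) = ∫ x, f x ∂(𝔤 ι) := by
  conv_rhs => rw [← gm_flip S]
  rw [integral_map (measurable_flip S).aemeasurable hf.aestronglyMeasurable]

/-! ### Block monomials and seminorms on arrays -/

section Monomials

variable {d n : ℕ}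

/-- Assignments of a real number to each variable `y^I_v`, where `I` runs over all subsets of `[d]` and
`v` over the multi-indices in `[n]^I`. -/
abbrev Om (d n : ℕ) := GIdx d n → ℝ

/-- Real `d`-indexed arrays. -/
abbrev Wt (d n : ℕ) := (Fin d → Fin n) → ℝ

/-- The array `i ↦ ∏_{I ∈ X} y^I_{i_I}`. -/
def mon (X : Finset (Finset (Fin d))) (y : Om d n) : Wt d n :=
  fun i => ∏ I ∈ X, y ⟨I, fun l => i l.1⟩

/-- The coordinates belonging to blocks in `X`. -/
def blk (n : ℕ) (X : Finset (Finset (Fin d))) : Set (GIdx d n) := {a | a.1 ∈ X}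

/-- Families whose components at the blocks of `X` lie in the Euclidean unit ball. -/
def BB (n : ℕ) (X : Finset (Finset (Fin d))) : Set (Om d n) :=
  {x | ∀ I ∈ X, ∑ v : {l // l ∈ I} → Fin n, x ⟨I, v⟩ ^ 2 ≤ 1}

lemma mon_congr {X : Finset (Finset (Fin d))} {y y' : Om d n}
    (h : ∀ I ∈ X, ∀ v, y ⟨I, v⟩ = y' ⟨I, v⟩) : mon X y = mon X y' := by
  ext i; exact Finset.prod_congr rfl fun I hI => h I hI _

@[simp] lemma mon_empty (y : Om d n) : mon ∅ y = 1 := by ext i; simp [mon]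

lemma mon_union {X Y : Finset (Finset (Fin d))} (h : Disjoint X Y) (y : Om d n) :
    mon (X ∪ Y) y = mon X y * mon Y y := by
  ext i; simp [mon, Finset.prod_union h]

lemma mon_insert {I : Finset (Fin d)} {Y : Finset (Finset (Fin d))} (h : I ∉ Y) (y : Om d n) :
    mon (insert I Y) y = mon {I} y * mon Y y := by
  ext i; simp [mon, Finset.prod_insert h]

lemma mon_splice_sub {X Y : Finset (Finset (Fin d))} (h : X ⊆ Y) (x y : Om d n) :
    mon X (splice (blk n Y) x y) = mon X x := by
  refine mon_congr fun I hI v => ?_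
  have : (⟨I, v⟩ : GIdx d n) ∈ blk n Y := h hI
  simp [splice, this]

lemma mon_splice_disj {X Y : Finset (Finset (Fin d))} (h : Disjoint X Y) (x y : Om d n) :
    mon X (splice (blk n Y) x y) = mon X y := by
  refine mon_congr fun I hI v => ?_
  have : (⟨I, v⟩ : GIdx d n) ∉ blk n Y := fun h' => Finset.disjoint_left.1 h hI h'
  simp [splice, this]

lemma continuous_mon (X : Finset (Finset (Fin d))) : Continuous (mon (n := n) X) := by
  unfold mon; fun_prop

lemma measurable_mon (X : Finset (Finset (Fin d))) : Measurable (mon (n := n) X) :=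
  (continuous_mon X).measurable

/-- A monomial as a product over all coordinates. -/
lemma mon_eq_prod (X : Finset (Finset (Fin d))) (y : Om d n) (i : Fin d → Fin n) :
    mon X y i = ∏ a : GIdx d n, if a.1 ∈ X ∧ a.2 = (fun l => i l.1) then y a else 1 := by
  rw [Fintype.prod_sigma]
  unfold mon
  rw [← Finset.prod_subset (Finset.subset_univ X)]
  · refine Finset.prod_congr rfl fun I hI => ?_
    rw [Finset.prod_eq_single (fun l => i l.1)]
    · simp [hI]
    · intro b _ hb; simp [hb]
    · simp
  · intro I _ hI
    refine Finset.prod_eq_one fun v _ => ?_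
    simp [hI]

lemma integrable_gauss_mul (a b : Prop) [Decidable a] [Decidable b] :
    Integrable (fun t : ℝ => (if a then t else 1) * (if b then t else 1)) (gaussianReal 0 1) := by
  have h1 : Integrable (fun t : ℝ => t) (gaussianReal 0 1) :=
    (memLp_id_gaussianReal' 1 (by simp)).integrable le_rfl
  have h2 : Integrable (fun t : ℝ => t ^ 2) (gaussianReal 0 1) :=
    (memLp_id_gaussianReal' 2 (by simp)).integrable_sq
  by_cases ha : a <;> by_cases hb : b <;> simp only [ha, hb, if_true, if_false]
  · simpa [sq] using h2
  · simpa using h1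
  · simpa using h1
  · simp

lemma mon_mul_eq_prod (X : Finset (Finset (Fin d))) (y : Om d n) (i j : Fin d → Fin n) :
    mon X y i * mon X y j = ∏ a : GIdx d n, (fun t : ℝ =>
      (if a.1 ∈ X ∧ a.2 = (fun l => i l.1) then t else 1) *
      (if a.1 ∈ X ∧ a.2 = (fun l => j l.1) then t else 1)) (y a) := by
  rw [mon_eq_prod, mon_eq_prod, ← Finset.prod_mul_distrib]

lemma integrable_mon_mul (X : Finset (Finset (Fin d))) (i j : Fin d → Fin n) :
    Integrable (fun y => mon X y i * mon X y j) (𝔤 (GIdx d n)) := by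
  simp_rw [mon_mul_eq_prod]
  exact Integrable.fintype_prod (μ := fun _ : GIdx d n => gaussianReal 0 1)
    fun a => integrable_gauss_mul _ _

lemma integrable_mon (X : Finset (Finset (Fin d))) (i : Fin d → Fin n) :
    Integrable (fun y => mon X y i) (𝔤 (GIdx d n)) := by
  have h : MemLp (fun y => mon X y i) 2 (𝔤 (GIdx d n)) := by
    rw [memLp_two_iff_integrable_sq]
    · simp_rw [sq]; exact integrable_mon_mul X i i
    · exact ((measurable_pi_apply i).comp (measurable_mon X)).aestronglyMeasurable
  exact h.integrable (by norm_num)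

lemma integral_gauss_mul (a b : Prop) [Decidable a] [Decidable b] :
    ∫ t, (if a then t else 1) * (if b then t else 1) ∂(gaussianReal 0 1) =
      if (a ↔ b) then (1:ℝ) else 0 := by
  have h2 : ∫ t, t * t ∂(gaussianReal 0 1) = 1 := by
    have h := variance_fun_id_gaussianReal (μ := 0) (v := 1)
    rw [variance_eq_integral (by fun_prop)] at h
    simp only [integral_id_gaussianReal, sub_zero] at h
    simpa [sq] using h
  by_cases ha : a <;> by_cases hb : b <;> simp [ha, hb, h2]

/-- Orthonormality of Gaussian monomials. -/
lemma integral_mon_mul (X : Finset (Finset (Fin d))) (i j : Fin d → Fin n) :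
    ∫ y, mon X y i * mon X y j ∂(𝔤 (GIdx d n)) =
      if (∀ I ∈ X, ∀ l ∈ I, i l = j l) then 1 else 0 := by
  simp_rw [mon_mul_eq_prod]
  unfold 𝔤 _root_.stdGaussian
  rw [integral_fintype_prod_eq_prod (μ := fun _ : GIdx d n => gaussianReal 0 1)
    (f := fun (a : GIdx d n) (t : ℝ) => (if a.1 ∈ X ∧ a.2 = (fun l => i l.1) then t else 1) *
      (if a.1 ∈ X ∧ a.2 = (fun l => j l.1) then t else 1))]
  simp_rw [integral_gauss_mul]
  by_cases h : ∀ I ∈ X, ∀ l ∈ I, i l = j l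
  · rw [if_pos h]
    refine Finset.prod_eq_one fun a _ => ?_
    rw [if_pos]
    refine and_congr_right fun ha => ?_
    have : (fun l : {l // l ∈ a.1} => i l.1) = fun l => j l.1 := by
      ext l; rw [h _ ha _ l.2]
    rw [this]
  · rw [if_neg h]
    push Not at h
    obtain ⟨I, hI, l, hl, hne⟩ := h
    refine Finset.prod_eq_zero (Finset.mem_univ (⟨I, fun l => i l.1⟩ : GIdx d n)) ?_
    rw [if_neg]
    simp only [hI, true_and, true_iff]
    intro h
    exact hne (congrFun h ⟨l, hl⟩)

/-- Partial sums of an array over the fibres of `i ↦ i_U`. -/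
def con (U : Finset (Fin d)) (z : Wt d n) : ({l // l ∈ U} → Fin n) → ℝ :=
  fun u => ∑ i, if (fun l : {l // l ∈ U} => i l.1) = u then z i else 0

/-- Squared `ℓ²` norm of `con U z`. -/
def nrm (U : Finset (Fin d)) (z : Wt d n) : ℝ := ∑ u, con U z u ^ 2

lemma nrm_nonneg (U : Finset (Fin d)) (z : Wt d n) : 0 ≤ nrm U z :=
  Finset.sum_nonneg fun _ _ => sq_nonneg _

lemma con_pair (U : Finset (Fin d)) (z : Wt d n) (y : Om d n) :
    ∑ u, con U z u * y ⟨U, u⟩ = ∑ i, z i * mon {U} y i := by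
  unfold con mon
  simp_rw [Finset.sum_mul]
  rw [Finset.sum_comm]
  refine Finset.sum_congr rfl fun i _ => ?_
  simp

lemma nrm_eq (U : Finset (Fin d)) (z : Wt d n) :
    nrm U z = ∑ i, ∑ j, if (∀ l ∈ U, i l = j l) then z i * z j else 0 := by
  unfold nrm con
  simp_rw [sq, Finset.sum_mul_sum]
  rw [Finset.sum_comm]
  refine Finset.sum_congr rfl fun i _ => ?_
  rw [Finset.sum_comm]
  refine Finset.sum_congr rfl fun j _ => ?_
  rw [Finset.sum_eq_single (fun l : {l // l ∈ U} => i l.1)]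
  · have : ((fun l : {l // l ∈ U} => j l.1) = fun l => i l.1) ↔ ∀ l ∈ U, i l = j l := by
      constructor
      · intro h l hl; exact (congrFun h ⟨l, hl⟩).symm
      · intro h; ext l; rw [h _ l.2]
    simp [this]
  · intro b _ hb; simp [Ne.symm hb]
  · simp

lemma con_sum {σ : Type*} (s : Finset σ) (U : Finset (Fin d)) (z : σ → Wt d n) :
    con U (∑ a ∈ s, z a) = ∑ a ∈ s, con U (z a) := by
  ext u
  simp only [con, Finset.sum_apply]
  rw [Finset.sum_comm]
  refine Finset.sum_congr rfl fun i _ => ?_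
  by_cases h : (fun l : {l // l ∈ U} => i l.1) = u <;> simp [h]

lemma con_smul (U : Finset (Fin d)) (c : ℝ) (z : Wt d n) : con U (c • z) = c • con U z := by
  ext u; simp [con, Finset.mul_sum]

lemma nrm_smul (U : Finset (Fin d)) (c : ℝ) (z : Wt d n) : nrm U (c • z) = c ^ 2 * nrm U z := by
  simp [nrm, con_smul, mul_pow, Finset.mul_sum]

lemma nrm_neg (U : Finset (Fin d)) (z : Wt d n) : nrm U (-z) = nrm U z := by
  have := nrm_smul U (-1) z
  simpa using this

lemma nrm_sum_le {σ : Type*} (s : Finset σ) (U : Finset (Fin d)) (z : σ → Wt d n) :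
    nrm U (∑ a ∈ s, z a) ≤ s.card * ∑ a ∈ s, nrm U (z a) := by
  unfold nrm
  rw [con_sum, Finset.sum_comm, Finset.mul_sum]
  refine Finset.sum_le_sum fun u _ => ?_
  simp only [Finset.sum_apply]
  exact sq_sum_le_card_mul_sum_sq

lemma continuous_nrm (U : Finset (Fin d)) : Continuous (nrm (n := n) U) := by
  unfold nrm con
  refine continuous_finsetSum _ fun u _ => ?_
  refine Continuous.pow (continuous_finsetSum _ fun i _ => ?_) 2
  by_cases h : (fun l : {l // l ∈ U} => i l.1) = u <;> simp only [h, if_true, if_false] <;> fun_prop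

/-- Pairing of arrays. -/
def pr (t z : Wt d n) : ℝ := ∑ i, t i * z i

/-- Functionals dominated by the seminorm `q`. -/
def TT (q : Seminorm ℝ (Wt d n)) : Set (Wt d n) := {t | ∀ z, pr t z ≤ q z}

/-- Every value of a seminorm is attained by a linear functional dominated by it (Hahn–Banach). -/
lemma exists_TT (q : Seminorm ℝ (Wt d n)) (z : Wt d n) : ∃ t ∈ TT q, pr t z = q z := by
  by_cases hz : z = 0
  · refine ⟨0, fun w => ?_, ?_⟩ <;> simp [pr, hz]
  obtain ⟨g, hg1, hg2⟩ := exists_extension_of_le_sublinear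
    (LinearPMap.mkSpanSingleton (K := ℝ) z (q z) hz) q
    (fun c hc x => by rw [map_smul_eq_mul, Real.norm_of_nonneg hc.le])
    (fun x y => map_add_le_add q x y) (by
      rintro ⟨x, hx⟩
      obtain ⟨c, rfl⟩ := Submodule.mem_span_singleton.1 hx
      rw [LinearPMap.mkSpanSingleton'_apply, map_smul_eq_mul]
      exact mul_le_mul_of_nonneg_right (le_abs_self c) (apply_nonneg q z))
  have key : ∀ w, pr (fun i => g (Pi.single i 1)) w = g w := by
    intro w
    have : w = ∑ i, w i • (Pi.single i (1:ℝ) : Wt d n) := by simpa using (pi_eq_sum_univ' w)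
    conv_rhs => rw [this]
    rw [map_sum]
    refine Finset.sum_congr rfl fun i _ => ?_
    rw [map_smul, smul_eq_mul, mul_comm]
  refine ⟨fun i => g (Pi.single i 1), fun w => by rw [key]; exact hg2 w, ?_⟩
  rw [key]
  have := hg1 ⟨z, Submodule.mem_span_singleton_self z⟩
  rw [this]
  exact LinearPMap.mkSpanSingleton_apply ℝ ℝ hz (q z)

lemma continuous_seminorm (q : Seminorm ℝ (Wt d n)) : Continuous q := by
  have := q.convexOn.continuousOn isOpen_univ
  exact continuousOn_univ.1 this

lemma seminorm_le_sum (q : Seminorm ℝ (Wt d n)) (z : Wt d n) :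
    q z ≤ ∑ i, |z i| * q (Pi.single i 1) := by
  have : z = ∑ i, z i • (Pi.single i (1:ℝ) : Wt d n) := by simpa using (pi_eq_sum_univ' z)
  conv_lhs => rw [this]
  refine (Finset.le_sum_of_subadditive q (map_zero q).le (map_add_le_add q) _ _).trans (Finset.sum_le_sum fun i _ => ?_)
  rw [map_smul_eq_mul, Real.norm_eq_abs]

/-- For a functional `t ≤ q`, the `ℓ²` norm of `con U (t * w)` is at most the supremum of
`q (w * mon {U} y)` over the unit ball of the block `U`. -/
lemma nrm_dual {q : Seminorm ℝ (Wt d n)} {t : Wt d n} (ht : t ∈ TT q) (U : Finset (Fin d))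
    (w : Wt d n) {D : ℝ} (h : ∀ y ∈ BB n {U}, q (w * mon {U} y) ≤ D) :
    nrm U (t * w) ≤ D ^ 2 := by
  set N := nrm U (t * w) with hN
  have hN0 : 0 ≤ N := nrm_nonneg _ _
  rcases hN0.eq_or_lt with h0 | h0
  · rw [← h0]; positivity
  have hs := Real.sqrt_pos.2 h0
  have hsq := Real.sq_sqrt hN0
  let y : Om d n := fun a => if e : a.1 = U then con U (t * w) (fun l => a.2 ⟨l.1, e ▸ l.2⟩) / √N else 0
  have hy : ∀ v, y ⟨U, v⟩ = con U (t * w) v / √N := by intro v; simp [y]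
  have hyB : y ∈ BB n {U} := by
    intro I hI
    rw [Finset.mem_singleton] at hI
    subst hI
    simp_rw [hy, div_pow, ← Finset.sum_div]
    rw [hsq]
    change N / N ≤ 1
    rw [div_self h0.ne']
  have h1 := con_pair U (t * w) y
  simp_rw [hy] at h1
  have h2 : ∑ u, con U (t * w) u * (con U (t * w) u / √N) = √N := by
    have : ∑ u, con U (t * w) u * (con U (t * w) u / √N) = N / √N := by
      rw [hN, nrm, Finset.sum_div]; refine Finset.sum_congr rfl fun u _ => ?_; ring
    rw [this]; field_simp; exact hsq.symm
  have h3 : ∑ i, (t * w) i * mon {U} y i = pr t (w * mon {U} y) := by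
    unfold pr; refine Finset.sum_congr rfl fun i _ => ?_; simp [mul_assoc]
  have h4 : √N ≤ D := by
    rw [← h2, h1, h3]; exact (ht _).trans (h y hyB)
  calc N = √N ^ 2 := hsq.symm
    _ ≤ D ^ 2 := by gcongr

end Monomials

/-! ### The good event for a shifted chaos -/

section Key

variable {d n : ℕ}

lemma nrm_mul_mon_eq (I₀ : Finset (Fin d)) (Y : Finset (Finset (Fin d))) (w : Wt d n) (y : Om d n) :
    nrm I₀ (w * mon Y y) = ∑ i, ∑ j, (if (∀ l ∈ I₀, i l = j l) then w i * w j else 0) *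
      (mon Y y i * mon Y y j) := by
  rw [nrm_eq]
  refine Finset.sum_congr rfl fun i _ => Finset.sum_congr rfl fun j _ => ?_
  by_cases h : ∀ l ∈ I₀, i l = j l
  · rw [if_pos h, if_pos h]; simp only [Pi.mul_apply]; ring
  · rw [if_neg h, if_neg h]; simp

lemma integrable_nrm_mul_mon (I₀ : Finset (Fin d)) (Y : Finset (Finset (Fin d))) (w : Wt d n) :
    Integrable (fun y => nrm I₀ (w * mon Y y)) (𝔤 (GIdx d n)) := by
  simp_rw [nrm_mul_mon_eq]
  exact integrable_finsetSum _ fun i _ => integrable_finsetSum _ fun j _ =>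
    (integrable_mon_mul Y i j).const_mul _

/-- Averaging over Gaussian blocks `Y` merges them with `I₀` into a single Hilbert–Schmidt block. -/
lemma integral_nrm_mul_mon (I₀ : Finset (Fin d)) (Y : Finset (Finset (Fin d))) (w : Wt d n) :
    ∫ y, nrm I₀ (w * mon Y y) ∂(𝔤 (GIdx d n)) = nrm (I₀ ∪ Y.sup id) w := by
  simp_rw [nrm_mul_mon_eq]
  rw [integral_finsetSum _ fun i _ => integrable_finsetSum _ fun j _ =>
    (integrable_mon_mul Y i j).const_mul _, nrm_eq]
  refine Finset.sum_congr rfl fun i _ => ?_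
  rw [integral_finsetSum _ fun j _ => (integrable_mon_mul Y i j).const_mul _]
  refine Finset.sum_congr rfl fun j _ => ?_
  rw [integral_const_mul, integral_mon_mul]
  have : (∀ l ∈ I₀ ∪ Y.sup id, i l = j l) ↔
      (∀ l ∈ I₀, i l = j l) ∧ ∀ I ∈ Y, ∀ l ∈ I, i l = j l := by
    constructor
    · intro h
      refine ⟨fun l hl => h l (Finset.mem_union_left _ hl), fun I hI l hl => h l ?_⟩
      exact Finset.mem_union_right _ (Finset.le_sup (f := id) hI hl)
    · rintro ⟨h1, h2⟩ l hl
      rcases Finset.mem_union.1 hl with h | h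
      · exact h1 l h
      · obtain ⟨I, hI, hl⟩ := Finset.mem_sup.1 h
        exact h2 I hI l hl
  by_cases h1 : ∀ l ∈ I₀, i l = j l <;> by_cases h2 : ∀ I ∈ Y, ∀ l ∈ I, i l = j l
  · rw [if_pos h1, if_pos h2, if_pos (this.2 ⟨h1, h2⟩), mul_one]
  · rw [if_neg h2, if_neg (fun h => h2 (this.1 h).2), mul_zero]
  · rw [if_neg h1, if_neg (fun h => h1 (this.1 h).1), zero_mul]
  · rw [if_neg h1, if_neg (fun h => h1 (this.1 h).1), zero_mul]

/-- Multilinear expansion of a monomial in shifted variables. -/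
lemma mon_add_smul (X : Finset (Finset (Fin d))) (y x : Om d n) (s : ℝ) :
    mon X (y + s • x) = ∑ I ∈ X.powerset, s ^ I.card • (mon I x * mon (X \ I) y) := by
  ext i
  unfold mon
  simp only [Pi.add_apply, Pi.smul_apply, smul_eq_mul, Finset.sum_apply, Pi.mul_apply]
  rw [Finset.prod_congr rfl fun I _ => add_comm _ _, Finset.prod_add]
  refine Finset.sum_congr rfl fun I _ => ?_
  rw [Finset.prod_mul_distrib, Finset.prod_const, mul_assoc]

lemma mon_flip_mem {X : Finset (Finset (Fin d))} {J : Finset (Fin d)} (hJ : J ∈ X) (y : Om d n) :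
    mon X (flip' (blk n {J}) y) = - mon X y := by
  have hX : X = insert J (X.erase J) := (Finset.insert_erase hJ).symm
  rw [hX, mon_insert (Finset.notMem_erase _ _), mon_insert (Finset.notMem_erase _ _), ← neg_mul]
  congr 1
  · ext i; simp [mon, flip', blk]
  · refine mon_congr fun I hI v => ?_
    have : I ≠ J := (Finset.mem_erase.1 hI).1
    simp [flip', blk, this]

lemma mon_flip_notMem {X : Finset (Finset (Fin d))} {J : Finset (Fin d)} (hJ : J ∉ X) (y : Om d n) :
    mon X (flip' (blk n {J}) y) = mon X y := by
  refine mon_congr fun I hI v => ?_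
  have : I ≠ J := fun h => hJ (h ▸ hI)
  simp [flip', blk, this]

/-- The event that, in the expansion of `t * mon X (y + s • x)`, every term has squared `ℓ²` norm
(of its contraction to `I₀`) less than `Q`. -/
def good (X : Finset (Finset (Fin d))) (I₀ : Finset (Fin d)) (t : Wt d n) (x : Om d n)
    (s Q : ℝ) : Set (Om d n) :=
  {y | ∀ I ∈ X.powerset, (s ^ I.card) ^ 2 * nrm I₀ (t * mon I x * mon (X \ I) y) < Q}

lemma isOpen_good (X : Finset (Finset (Fin d))) (I₀ : Finset (Fin d)) (t : Wt d n) (x : Om d n)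
    (s Q : ℝ) : IsOpen (good X I₀ t x s Q) := by
  have : good X I₀ t x s Q = ⋂ I ∈ X.powerset,
      {y | (s ^ I.card) ^ 2 * nrm I₀ (t * mon I x * mon (X \ I) y) < Q} := by
    ext y; simp [good]
  rw [this]
  refine isOpen_biInter_finset fun I _ => isOpen_lt ?_ continuous_const
  have h1 := continuous_nrm (n := n) I₀
  have h2 := continuous_mon (n := n) (X \ I)
  exact continuous_const.mul (h1.comp (continuous_const.mul h2))

lemma good_flip (X : Finset (Finset (Fin d))) (I₀ : Finset (Fin d)) (t : Wt d n) (x : Om d n)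
    (s Q : ℝ) (J : Finset (Fin d)) (y : Om d n) :
    flip' (blk n {J}) y ∈ good X I₀ t x s Q ↔ y ∈ good X I₀ t x s Q := by
  refine forall_congr' fun I => forall_congr' fun _ => ?_
  by_cases h : J ∈ X \ I
  · rw [mon_flip_mem h, mul_neg, nrm_neg]
  · rw [mon_flip_notMem h]

/-- The good event has probability at least one half, by Markov and a union bound. -/
lemma good_prob {X : Finset (Finset (Fin d))} {I₀ : Finset (Fin d)} {t : Wt d n} {x : Om d n}
    {s D₀ : ℝ} (hD : 0 < D₀)
    (h : ∀ I ∈ X.powerset, (s ^ I.card) ^ 2 * nrm (I₀ ∪ (X \ I).sup id) (t * mon I x) ≤ D₀ ^ 2) :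
    1 / 2 ≤ (𝔤 (GIdx d n)).real (good X I₀ t x s (2 * 2 ^ X.card * D₀ ^ 2)) := by
  set Q := 2 * 2 ^ X.card * D₀ ^ 2 with hQ
  have hQ0 : 0 < Q := by positivity
  have hcompl : (good X I₀ t x s Q)ᶜ = ⋃ I ∈ X.powerset,
      {y | Q ≤ (s ^ I.card) ^ 2 * nrm I₀ (t * mon I x * mon (X \ I) y)} := by
    ext y; simp [good]
  have h1 : (𝔤 (GIdx d n)).real (good X I₀ t x s Q)ᶜ ≤ ∑ I ∈ X.powerset, D₀ ^ 2 / Q := by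
    rw [hcompl]
    refine (measureReal_biUnion_finset_le _ _).trans (Finset.sum_le_sum fun I hI => ?_)
    rw [le_div_iff₀' hQ0]
    refine (mul_meas_ge_le_integral_of_nonneg (Filter.Eventually.of_forall fun y => ?_)
      ((integrable_nrm_mul_mon I₀ (X \ I) (t * mon I x)).const_mul _) Q).trans ?_
    · exact mul_nonneg (sq_nonneg _) (nrm_nonneg _ _)
    · rw [integral_const_mul, integral_nrm_mul_mon]; exact h I hI
  have h2 : ∑ I ∈ X.powerset, D₀ ^ 2 / Q = 1 / 2 := by
    rw [Finset.sum_const, Finset.card_powerset, nsmul_eq_mul, hQ]; push_cast; field_simp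
  have h3 := probReal_add_probReal_compl (μ := 𝔤 (GIdx d n)) (isOpen_good X I₀ t x s Q).measurableSet
  linarith

/-- On the good event the linear form `g ↦ pr t (mon X (y + s • x) * mon {I₀} g)` has a small `ℓ²` norm. -/
lemma good_nrm {X : Finset (Finset (Fin d))} {I₀ : Finset (Fin d)} {t : Wt d n} {x : Om d n}
    {s Q : ℝ} {y : Om d n} (hy : y ∈ good X I₀ t x s Q) :
    nrm I₀ (t * mon X (y + s • x)) < 2 ^ X.card * 2 ^ X.card * Q := by
  rw [mon_add_smul, Finset.mul_sum]
  refine (nrm_sum_le _ _ _).trans_lt ?_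
  rw [Finset.card_powerset]
  have : ∑ I ∈ X.powerset, nrm I₀ (t * s ^ I.card • (mon I x * mon (X \ I) y)) <
      ∑ I ∈ X.powerset, Q := by
    refine Finset.sum_lt_sum_of_nonempty ⟨∅, by simp⟩ fun I hI => ?_
    rw [mul_smul_comm, nrm_smul, ← mul_assoc]
    exact hy I hI
  rw [Finset.sum_const, Finset.card_powerset, nsmul_eq_mul] at this
  push_cast at this ⊢
  rw [mul_assoc]
  exact mul_lt_mul_of_pos_left this (by positivity)

lemma pr_mul (t a m : Wt d n) : pr t (a * m) = pr (t * m) a := by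
  unfold pr; refine Finset.sum_congr rfl fun i _ => ?_; simp; ring

lemma pr_sum {σ : Type*} (s : Finset σ) (t : Wt d n) (z : σ → Wt d n) :
    pr t (∑ a ∈ s, z a) = ∑ a ∈ s, pr t (z a) := by
  unfold pr; simp_rw [Finset.sum_apply, Finset.mul_sum]; exact Finset.sum_comm

lemma pr_smul (t z : Wt d n) (c : ℝ) : pr t (c • z) = c * pr t z := by
  unfold pr; rw [Finset.mul_sum]; refine Finset.sum_congr rfl fun i _ => ?_; simp; ring

lemma integrable_pr_mon (t : Wt d n) (Y : Finset (Finset (Fin d))) :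
    Integrable (fun y => pr t (mon Y y)) (𝔤 (GIdx d n)) := by
  unfold pr
  exact integrable_finsetSum _ fun i _ => (integrable_mon Y i).const_mul _

lemma continuous_pr (t : Wt d n) : Continuous (pr t) := by unfold pr; fun_prop

/-- By symmetry, only the top-order term in the direction `x` survives integration over the
good event. -/
lemma good_integral {X : Finset (Finset (Fin d))} {I₀ : Finset (Fin d)} {t : Wt d n} {x : Om d n}
    {s Q : ℝ} (m : Wt d n) :
    Integrable (fun y => pr t (mon X (y + s • x) * m)) (𝔤 (GIdx d n)) ∧
    ∫ y in good X I₀ t x s Q, pr t (mon X (y + s • x) * m) ∂(𝔤 (GIdx d n)) =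
      (𝔤 (GIdx d n)).real (good X I₀ t x s Q) * (s ^ X.card * pr t (mon X x * m)) := by
  have e : ∀ y, pr t (mon X (y + s • x) * m) =
      ∑ I ∈ X.powerset, s ^ I.card * pr (t * m * mon I x) (mon (X \ I) y) := by
    intro y
    rw [pr_mul, mon_add_smul, pr_sum]
    refine Finset.sum_congr rfl fun I _ => ?_
    rw [pr_smul, mul_comm (mon I x), pr_mul]
  have hi : ∀ I ∈ X.powerset, Integrable
      (fun y => s ^ I.card * pr (t * m * mon I x) (mon (X \ I) y)) (𝔤 (GIdx d n)) :=
    fun I _ => (integrable_pr_mon _ _).const_mul _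
  have hG := (isOpen_good X I₀ t x s Q).measurableSet
  simp_rw [e]
  refine ⟨integrable_finsetSum _ hi, ?_⟩
  rw [integral_finsetSum _ fun I hI => (hi I hI).integrableOn]
  rw [Finset.sum_eq_single X]
  · rw [integral_const_mul, Finset.sdiff_self, pr_mul]
    have : ∀ y : Om d n, pr (t * m * mon X x) (mon ∅ y) = pr (t * m) (mon X x) := by
      intro y
      rw [← pr_mul]; simp
    simp_rw [this]
    rw [setIntegral_const, smul_eq_mul]; ring
  · intro I hI hne
    obtain ⟨J, hJ⟩ : (X \ I).Nonempty := by
      rw [Finset.sdiff_nonempty]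
      intro h; exact hne (Finset.Subset.antisymm (Finset.mem_powerset.1 hI) h)
    rw [integral_const_mul]
    have hz : ∫ y in good X I₀ t x s Q, pr (t * m * mon I x) (mon (X \ I) y) ∂(𝔤 (GIdx d n)) = 0 := by
      rw [← integral_indicator hG]
      set F : Om d n → ℝ := (good X I₀ t x s Q).indicator
        (fun y => pr (t * m * mon I x) (mon (X \ I) y)) with hF
      have hFm : Measurable F :=
        (((continuous_pr _).comp (continuous_mon _)).measurable).indicator hG
      -- the sign change of a block `J` in `X \ I` preserves the good event and makes the term odd
      have h1 := gm_integral_flip (blk n {J}) F hFm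
      have h2 : ∀ y, F (flip' (blk n {J}) y) = - F y := by
        intro y
        by_cases hy : y ∈ good X I₀ t x s Q
        · rw [hF, Set.indicator_of_mem hy, Set.indicator_of_mem ((good_flip ..).2 hy),
            mon_flip_mem hJ]
          have := pr_smul (t * m * mon I x) (mon (X \ I) y) (-1)
          simpa using this
        · rw [hF, Set.indicator_of_notMem hy,
            Set.indicator_of_notMem (fun h => hy ((good_flip ..).1 h))]
          simp
      simp_rw [h2] at h1
      rw [integral_neg] at h1
      linarith
    rw [hz, mul_zero]
  · intro h; exact absurd (Finset.mem_powerset_self X) h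

end Key

/-! ### Truncated suprema -/

section Key2

variable {d n : ℕ}

/-- Truncation of `q (mon X y * mon {I₀} g)`: only functionals `t` for which the linear form in `g`
has `ℓ²` norm less than `D` are kept, so that it is `D`-Lipschitz in `g`. -/
noncomputable def NN (q : Seminorm ℝ (Wt d n)) (X : Finset (Finset (Fin d))) (I₀ : Finset (Fin d))
    (D : ℝ) (g y : Om d n) : ℝ≥0∞ :=
  ⨆ t ∈ TT q, if nrm I₀ (t * mon X y) < D ^ 2 then
    ENNReal.ofReal (pr t (mon X y * mon {I₀} g)) else 0

lemma measurable_NN (q : Seminorm ℝ (Wt d n)) (X : Finset (Finset (Fin d))) (I₀ : Finset (Fin d))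
    (D : ℝ) : Measurable (fun z : Om d n × Om d n => NN q X I₀ D z.1 z.2) := by
  refine LowerSemicontinuous.measurable ?_
  unfold NN
  refine lowerSemicontinuous_iSup fun t => lowerSemicontinuous_iSup fun _ => ?_
  rw [lowerSemicontinuous_iff_isOpen_preimage]
  intro a
  have h1 := continuous_nrm (n := n) I₀
  have h2 := continuous_mon (n := n) X
  have h3 := continuous_mon (n := n) {I₀}
  have h4 := continuous_pr t
  have e : (fun z : Om d n × Om d n => if nrm I₀ (t * mon X z.2) < D ^ 2 then
      ENNReal.ofReal (pr t (mon X z.2 * mon {I₀} z.1)) else 0) ⁻¹' Set.Ioi a =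
      {z | nrm I₀ (t * mon X z.2) < D ^ 2} ∩
      {z | a < ENNReal.ofReal (pr t (mon X z.2 * mon {I₀} z.1))} := by
    ext z
    by_cases h : nrm I₀ (t * mon X z.2) < D ^ 2 <;> simp [h]
  rw [e]
  refine IsOpen.inter (isOpen_lt ?_ continuous_const) (isOpen_lt continuous_const ?_)
  · exact h1.comp (continuous_const.mul (h2.comp continuous_snd))
  · exact ENNReal.continuous_ofReal.comp (h4.comp ((h2.comp continuous_snd).mul
      (h3.comp continuous_fst)))

lemma NN_le (q : Seminorm ℝ (Wt d n)) (X : Finset (Finset (Fin d))) (I₀ : Finset (Fin d))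
    (D : ℝ) (g y : Om d n) : NN q X I₀ D g y ≤ ENNReal.ofReal (q (mon X y * mon {I₀} g)) := by
  refine iSup₂_le fun t ht => ?_
  split_ifs
  · exact ENNReal.ofReal_le_ofReal (ht _)
  · exact zero_le

/-- Cauchy–Schwarz for the linear form in the block `I₀`. -/
lemma pr_sub_le (I₀ : Finset (Fin d)) (a : Wt d n) (g g' : Om d n) :
    pr a (mon {I₀} g) ≤ pr a (mon {I₀} g') + √(nrm I₀ a) * √(∑ i, (g i - g' i) ^ 2) := by
  have h1 : pr a (mon {I₀} g) - pr a (mon {I₀} g') =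
      ∑ u, con I₀ a u * (g ⟨I₀, u⟩ - g' ⟨I₀, u⟩) := by
    unfold pr
    rw [← con_pair, ← con_pair, ← Finset.sum_sub_distrib]
    refine Finset.sum_congr rfl fun u _ => by ring
  have h2 : ∑ u, con I₀ a u * (g ⟨I₀, u⟩ - g' ⟨I₀, u⟩) ≤
      √(nrm I₀ a) * √(∑ u, (g ⟨I₀, u⟩ - g' ⟨I₀, u⟩) ^ 2) :=
    Real.sum_mul_le_sqrt_mul_sqrt _ _ _
  have h3 : ∑ u, (g ⟨I₀, u⟩ - g' ⟨I₀, u⟩) ^ 2 ≤ ∑ i, (g i - g' i) ^ 2 := by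
    rw [Fintype.sum_sigma]
    exact Finset.single_le_sum (f := fun J : Finset (Fin d) =>
      ∑ u : {l // l ∈ J} → Fin n, (g ⟨J, u⟩ - g' ⟨J, u⟩) ^ 2)
      (fun J _ => Finset.sum_nonneg fun u _ => sq_nonneg _) (Finset.mem_univ I₀)
  have h4 : √(nrm I₀ a) * √(∑ u, (g ⟨I₀, u⟩ - g' ⟨I₀, u⟩) ^ 2) ≤
      √(nrm I₀ a) * √(∑ i, (g i - g' i) ^ 2) := by gcongr
  linarith

/-- The truncated supremum is `D`-Lipschitz in `g` for the Euclidean distance. -/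
lemma NN_lip (q : Seminorm ℝ (Wt d n)) (X : Finset (Finset (Fin d))) (I₀ : Finset (Fin d))
    {D : ℝ} (hD : 0 ≤ D) (g g' y : Om d n) :
    NN q X I₀ D g y ≤ NN q X I₀ D g' y + ENNReal.ofReal (D * √(∑ i, (g i - g' i) ^ 2)) := by
  refine iSup₂_le fun t ht => ?_
  split_ifs with hlt
  · have h1 : pr t (mon X y * mon {I₀} g) ≤ pr t (mon X y * mon {I₀} g') +
        D * √(∑ i, (g i - g' i) ^ 2) := by
      rw [mul_comm, pr_mul, mul_comm (mon X y), pr_mul]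
      refine (pr_sub_le I₀ _ g g').trans ?_
      gcongr
      rw [Real.sqrt_le_left hD]; exact hlt.le
    refine (ENNReal.ofReal_le_ofReal h1).trans (ENNReal.ofReal_add_le.trans ?_)
    gcongr
    refine le_trans ?_ (le_iSup₂ (f := fun t (_ : t ∈ TT q) => if nrm I₀ (t * mon X y) < D ^ 2 then
      ENNReal.ofReal (pr t (mon X y * mon {I₀} g')) else 0) t ht)
    simp only [if_pos hlt]; exact le_rfl
  · exact zero_le

/-- Gaussian concentration applied to the truncated supremum as a function of `g`. -/
lemma NN_conc (q : Seminorm ℝ (Wt d n)) (X : Finset (Finset (Fin d))) (I₀ : Finset (Fin d))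
    {D : ℝ} (hD : 0 ≤ D) (y : Om d n) {p : ℝ} (hp : 1 ≤ p) :
    ∫⁻ g, NN q X I₀ D g y ^ p ∂(𝔤 (GIdx d n)) ≤
      16 ^ p * ((∫⁻ g, ENNReal.ofReal (q (mon X y * mon {I₀} g)) ∂(𝔤 (GIdx d n))) ^ p
        + ENNReal.ofReal (√p * D) ^ p) := by
  have hfin : ∀ g, NN q X I₀ D g y ≠ ⊤ := fun g =>
    ((NN_le q X I₀ D g y).trans_lt ENNReal.ofReal_lt_top).ne
  have hone : ∀ g g', (NN q X I₀ D g y).toReal ≤ (NN q X I₀ D g' y).toReal +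
      D * √(∑ i, (g i - g' i) ^ 2) := by
    intro g g'
    have := ENNReal.toReal_mono (by simp [hfin]) (NN_lip q X I₀ hD g g' y)
    rwa [ENNReal.toReal_add (hfin _) (by simp), ENNReal.toReal_ofReal (by positivity)] at this
  have h := concentration (h := fun g => (NN q X I₀ D g y).toReal) hD
    (fun g => ENNReal.toReal_nonneg) (fun g g' => by
      rw [abs_le]
      have h1 := hone g g'
      have h2 := hone g' g
      have e : ∑ i, (g' i - g i) ^ 2 = ∑ i, (g i - g' i) ^ 2 :=
        Finset.sum_congr rfl fun i _ => by ring
      rw [e] at h2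
      constructor <;> linarith) hp
  simp only [ENNReal.ofReal_toReal (hfin _)] at h
  refine h.trans ?_
  have hp0 : 0 ≤ p := by linarith
  gcongr with g
  exact NN_le q X I₀ D g y

/-- The value at `s • x` is recovered from an average over the shifted Gaussian point `y + s • x`. For the
functional `t` attaining `q (mon X x * mon {I₀} g)`, all lower-order terms of the expansion of
`mon X (y + s • x)` cancel on the good event by symmetry, and on that event `t` survives the truncation. -/
lemma key_pointwise (q : Seminorm ℝ (Wt d n)) (X : Finset (Finset (Fin d))) (I₀ : Finset (Fin d))
    {s D₀ : ℝ} (hs : 0 ≤ s) (hD : 0 < D₀)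
    (h : ∀ I ∈ X.powerset, ∀ x ∈ BB n I, ∀ y ∈ BB n {I₀ ∪ (X \ I).sup id},
      s ^ I.card * q (mon I x * mon {I₀ ∪ (X \ I).sup id} y) ≤ D₀)
    (x : Om d n) (hx : x ∈ BB n X) (g : Om d n) :
    ENNReal.ofReal (s ^ X.card * q (mon X x * mon {I₀} g)) ≤
      2 * ∫⁻ y, NN q X I₀ (4 ^ (X.card + 1) * D₀) g (y + s • x) ∂(𝔤 (GIdx d n)) := by
  obtain ⟨t, ht, hpr⟩ := exists_TT q (mon X x * mon {I₀} g)
  set k := X.card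
  have hn : ∀ I ∈ X.powerset,
      (s ^ I.card) ^ 2 * nrm (I₀ ∪ (X \ I).sup id) (t * mon I x) ≤ D₀ ^ 2 := by
    intro I hI
    rw [← nrm_smul, ← mul_smul_comm]
    refine nrm_dual ht _ _ fun y hy => ?_
    rw [smul_mul_assoc, map_smul_eq_mul, Real.norm_of_nonneg (by positivity)]
    exact h I hI x (fun J hJ => hx J (Finset.mem_powerset.1 hI hJ)) y hy
  have hprob := good_prob hD hn
  set G := good X I₀ t x s (2 * 2 ^ X.card * D₀ ^ 2) with hG
  obtain ⟨h_intble, hval⟩ := good_integral (X := X) (I₀ := I₀) (t := t) (x := x) (s := s)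
    (Q := 2 * 2 ^ X.card * D₀ ^ 2) (mon {I₀} g)
  rw [← hG, hpr] at hval
  have hq0 : 0 ≤ s ^ k * q (mon X x * mon {I₀} g) := mul_nonneg (by positivity) (apply_nonneg _ _)
  have h1 : s ^ k * q (mon X x * mon {I₀} g) ≤
      2 * ∫ y in G, pr t (mon X (y + s • x) * mon {I₀} g) ∂(𝔤 (GIdx d n)) := by
    rw [hval]; nlinarith
  refine (ENNReal.ofReal_le_ofReal h1).trans ?_
  rw [ENNReal.ofReal_mul (by norm_num), ENNReal.ofReal_ofNat]
  gcongr
  refine (ENNReal.ofReal_le_ofReal (integral_mono h_intble.integrableOn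
    h_intble.integrableOn.pos_part (fun y => le_max_left _ _))).trans ?_
  rw [ofReal_integral_eq_lintegral_ofReal h_intble.integrableOn.pos_part
    (Filter.Eventually.of_forall fun y => le_max_right _ _)]
  refine le_trans ?_ (setLIntegral_le_lintegral G _)
  refine setLIntegral_mono' (isOpen_good ..).measurableSet fun y hy => ?_
  have hlt : nrm I₀ (t * mon X (y + s • x)) < (4 ^ (k + 1) * D₀) ^ 2 := by
    refine (good_nrm hy).trans_le ?_
    rw [mul_pow, ← pow_mul, ← mul_assoc]
    gcongr
    have e1 : (2:ℝ) ^ k * 2 ^ k * (2 * 2 ^ k) = 2 * 8 ^ k := by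
      rw [show (8:ℝ) = 2 * 2 * 2 by norm_num, mul_pow, mul_pow]; ring
    have e2 : (4:ℝ) ^ ((k + 1) * 2) = 16 * 16 ^ k := by
      rw [mul_comm, pow_mul]; norm_num [pow_succ]; ring
    change (2:ℝ) ^ k * 2 ^ k * (2 * 2 ^ k) ≤ _
    rw [e1, e2]
    have : (8:ℝ) ^ k ≤ 16 ^ k := by gcongr; norm_num
    have : (0:ℝ) ≤ 16 ^ k := by positivity
    linarith
  refine le_trans ?_ (le_iSup₂ (f := fun t (_ : t ∈ TT q) =>
    if nrm I₀ (t * mon X (y + s • x)) < (4 ^ (k + 1) * D₀) ^ 2 then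
      ENNReal.ofReal (pr t (mon X (y + s • x) * mon {I₀} g)) else 0) t ht)
  simp only [if_pos hlt]
  rw [ENNReal.ofReal_max]; simp

end Key2

/-! ### The key estimate -/

section Key3

variable {d n : ℕ}

/-- The constant of the key lemma. -/
noncomputable def KK (d : ℕ) : ℝ≥0∞ :=
  2 * ENNReal.ofReal (Real.exp (2 ^ d)) * (16 * 4 ^ (2 ^ d + 1))

lemma KK_ne_top (d : ℕ) : KK d ≠ ⊤ := by
  unfold KK; finiteness

lemma card_le_two_pow (X : Finset (Finset (Fin d))) : X.card ≤ 2 ^ d := by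
  simpa using Finset.card_le_univ X

/-- The truncated supremum depends on `y` only through the monomial `mon X y`. -/
lemma NN_shift_congr (q : Seminorm ℝ (Wt d n)) (X : Finset (Finset (Fin d))) (I₀ : Finset (Fin d))
    (D : ℝ) (g y y' : Om d n) (h : mon X y = mon X y') : NN q X I₀ D g y = NN q X I₀ D g y' := by
  unfold NN; rw [h]

lemma measurable_NN_right (q : Seminorm ℝ (Wt d n)) (X : Finset (Finset (Fin d)))
    (I₀ : Finset (Fin d)) (D : ℝ) (g : Om d n) : Measurable (NN q X I₀ D g) := by
  have h := measurable_NN q X I₀ D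
  have h2 : Measurable (fun y : Om d n => ((g, y) : Om d n × Om d n)) := measurable_prodMk_left
  have := Measurable.comp h h2
  exact this

/-- Removal of the shift by the Cameron–Martin formula: since `√p • x` has squared length at most `p |X|`,
it costs only a factor `exp |X|` and a passage to `p`-th moments, and the bound no longer depends
on `x`. -/
lemma key_sup (q : Seminorm ℝ (Wt d n)) (X : Finset (Finset (Fin d))) (I₀ : Finset (Fin d))
    {p : ℝ} (hp : 2 ≤ p) {D : ℝ} (hDpos : 0 < D)
    (h : ∀ I ∈ X.powerset, ∀ x ∈ BB n I, ∀ y ∈ BB n {I₀ ∪ (X \ I).sup id},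
      √p ^ I.card * q (mon I x * mon {I₀ ∪ (X \ I).sup id} y) ≤ D) {k : ℕ} (hk : k = X.card)
    (g : Om d n) :
    (⨆ x ∈ BB n X, ENNReal.ofReal (√p ^ X.card * q (mon X x * mon {I₀} g))) ^ p
      ≤ (2 * ENNReal.ofReal (Real.exp (2 ^ d))) ^ p *
        ∫⁻ y, NN q X I₀ (4 ^ (k + 1) * D) g y ^ p ∂(𝔤 (GIdx d n)) := by
  have hp0 : 0 < p := by linarith
  have hkd : k ≤ 2 ^ d := hk ▸ card_le_two_pow X
  have hm : Measurable (fun y => NN q X I₀ (4 ^ (k + 1) * D) g y) :=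
    measurable_NN_right q X I₀ (4 ^ (k + 1) * D) g
  have h1 : (⨆ x ∈ BB n X, ENNReal.ofReal (√p ^ X.card * q (mon X x * mon {I₀} g))) ≤
      2 * ENNReal.ofReal (Real.exp (2 ^ d)) *
        (∫⁻ y, NN q X I₀ (4 ^ (k + 1) * D) g y ^ p ∂(𝔤 (GIdx d n))) ^ (1 / p) := by
    refine iSup₂_le fun x hx => ?_
    set x' := splice (blk n X) x 0 with hx'
    have hmx : mon X x = mon X x' := (mon_splice_sub (le_refl X) x 0).symm
    have hxB : x' ∈ BB n X := by
      intro I hI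
      have : ∀ v, x' ⟨I, v⟩ = x ⟨I, v⟩ := fun v => by
        have : (⟨I, v⟩ : GIdx d n) ∈ blk n X := hI
        simp [hx', splice, this]
      simp only [this]; exact hx I hI
    rw [hmx]
    refine (key_pointwise q X I₀ (Real.sqrt_nonneg p) hDpos ?_ x' hxB g).trans ?_
    · exact h
    rw [mul_assoc, ← hk]
    gcongr
    have hsum : ∑ i, (√p • x') i ^ 2 ≤ p * (k : ℝ) := by
      have e : ∀ i, (√p • x') i ^ 2 = p * x' i ^ 2 := fun i => by
        simp [mul_pow, Real.sq_sqrt hp0.le]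
      simp only [e]
      rw [← Finset.mul_sum]
      gcongr
      rw [Fintype.sum_sigma]
      rw [← Finset.sum_subset (Finset.subset_univ X)]
      · refine (Finset.sum_le_sum fun I hI => hxB I hI).trans ?_
        simp [hk]
      · intro I _ hI
        refine Finset.sum_eq_zero fun v _ => ?_
        have : (⟨I, v⟩ : GIdx d n) ∉ blk n X := hI
        simp [hx', splice, this]
    refine (gm_shift_le (√p • x') _ hm hp k hsum (by positivity)).trans ?_
    gcongr
    exact_mod_cast hkd
  calc _ ≤ _ := ENNReal.rpow_le_rpow h1 hp0.le
    _ = _ := by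
      rw [ENNReal.mul_rpow_of_nonneg _ _ hp0.le, ← ENNReal.rpow_mul]
      rw [one_div_mul_cancel hp0.ne', ENNReal.rpow_one]

/-- The supremum over the deterministic blocks `X` of a chaos with one Gaussian block `I₀` is
estimated, in `p`-th moment, by two terms: the chaos with `X` replaced by Gaussian blocks and averaged
over `I₀`, and `√p` times the suprema in which the blocks `X \ I` are merged with `I₀` into one
deterministic block. -/
lemma key_lemma (q : Seminorm ℝ (Wt d n)) (X : Finset (Finset (Fin d))) (I₀ : Finset (Fin d))
    {p : ℝ} (hp : 2 ≤ p) {D₀ : ℝ≥0∞} (hD : D₀ ≠ 0)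
    (h : ∀ I ∈ X.powerset, ∀ x ∈ BB n I, ∀ y ∈ BB n {I₀ ∪ (X \ I).sup id},
      ENNReal.ofReal (√p ^ I.card * q (mon I x * mon {I₀ ∪ (X \ I).sup id} y)) ≤ D₀) :
    ∫⁻ g, (⨆ x ∈ BB n X, ENNReal.ofReal (√p ^ X.card * q (mon X x * mon {I₀} g))) ^ p
        ∂(𝔤 (GIdx d n)) ≤
      KK d ^ p * (∫⁻ γ, (∫⁻ g, ENNReal.ofReal (q (mon X γ * mon {I₀} g)) ∂(𝔤 (GIdx d n))) ^ p
        ∂(𝔤 (GIdx d n)) + (ENNReal.ofReal √p * D₀) ^ p) := by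
  have hp0 : 0 < p := by linarith
  by_cases htop : D₀ = ⊤
  · have h1 : ENNReal.ofReal √p * D₀ = ⊤ := by
      rw [htop, ENNReal.mul_top]; simp [hp0]
    have h2 : KK d ≠ 0 := by
      unfold KK
      have := Real.exp_pos (2 ^ d)
      simp [this]
    rw [h1, ENNReal.top_rpow_of_pos hp0, add_top, ENNReal.mul_top]
    · exact le_top
    · simp [h2, hp0, KK_ne_top]
  obtain ⟨D, hDpos, hDeq⟩ : ∃ D : ℝ, 0 < D ∧ ENNReal.ofReal D = D₀ :=
    ⟨D₀.toReal, ENNReal.toReal_pos hD htop, ENNReal.ofReal_toReal htop⟩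
  obtain ⟨k, hk⟩ : ∃ k, k = X.card := ⟨_, rfl⟩
  have hkd : k ≤ 2 ^ d := hk ▸ card_le_two_pow X
  have hpt := key_sup (n := n) q X I₀ hp hDpos (fun I hI x hx y hy => by
    have := h I hI x hx y hy
    rwa [← hDeq, ENNReal.ofReal_le_ofReal_iff hDpos.le] at this) hk
  refine (lintegral_mono hpt).trans ?_
  have hmp : Measurable (Function.uncurry fun (g y : Om d n) => NN q X I₀ (4 ^ (k + 1) * D) g y ^ p) :=
    (measurable_NN q X I₀ (4 ^ (k + 1) * D)).pow_const p
  rw [lintegral_const_mul _ hmp.lintegral_prod_right, lintegral_lintegral_swap hmp.aemeasurable]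
  unfold KK
  rw [ENNReal.mul_rpow_of_nonneg (2 * ENNReal.ofReal (Real.exp (2 ^ d))) _ hp0.le, mul_assoc (_ ^ p)]
  refine mul_le_mul_right ?_ _
  calc _ ≤ ∫⁻ y, 16 ^ p * ((∫⁻ g, ENNReal.ofReal (q (mon X y * mon {I₀} g)) ∂(𝔤 (GIdx d n))) ^ p
        + ENNReal.ofReal (√p * (4 ^ (k + 1) * D)) ^ p) ∂(𝔤 (GIdx d n)) :=
        lintegral_mono fun y => NN_conc q X I₀ (by positivity) y (by linarith)
    _ = 16 ^ p * (∫⁻ y, (∫⁻ g, ENNReal.ofReal (q (mon X y * mon {I₀} g)) ∂(𝔤 (GIdx d n))) ^ p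
        ∂(𝔤 (GIdx d n)) + ENNReal.ofReal (√p * (4 ^ (k + 1) * D)) ^ p) := by
        rw [lintegral_const_mul' _ _ (by finiteness), lintegral_add_right _ measurable_const]
        simp
    _ ≤ _ := by
        have e : ENNReal.ofReal (√p * (4 ^ (k + 1) * D)) = 4 ^ (k + 1) * (ENNReal.ofReal √p * D₀) := by
          rw [ENNReal.ofReal_mul (by positivity), ENNReal.ofReal_mul (by positivity), hDeq,
            ENNReal.ofReal_pow (by norm_num)]
          simp only [ENNReal.ofReal_ofNat]
          ring
        rw [e, ENNReal.mul_rpow_of_nonneg _ _ hp0.le, ENNReal.mul_rpow_of_nonneg (16 : ℝ≥0∞) _ hp0.le,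
          mul_assoc, mul_add]
        have h4 : (4 : ℝ≥0∞) ^ (k + 1) ≤ 4 ^ (2 ^ d + 1) := by
          gcongr; norm_num
        have h41 : (1 : ℝ≥0∞) ≤ (4 ^ (2 ^ d + 1)) ^ p :=
          ENNReal.one_le_rpow (one_le_pow₀ (by norm_num)) hp0
        rw [← mul_add]
        gcongr
        rw [mul_add]
        gcongr
        exact le_mul_of_one_le_left' h41

end Key3

/-! ### Operations on partition pairs -/

section Partitions

variable {d : ℕ}

/-- The merged block is new; it contains the nonempty block `I₀`, which is disjoint from all of `X`. -/
lemma IsPartitionPair.not_mem {U : Finset (Fin d)} {X L : Finset (Finset (Fin d))}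
    (h : IsPartitionPair U X L) {I₀ : Finset (Fin d)} (hI₀ : I₀ ∈ L) {I : Finset (Finset (Fin d))}
    (hI : I ⊆ X) : I₀ ∪ (X \ I).sup id ∉ I := by
  intro hmem
  obtain ⟨hd, hne, hdisj, -⟩ := h
  have hX := hI hmem
  have h1 : Disjoint I₀ (I₀ ∪ (X \ I).sup id) := by
    refine hdisj _ (Finset.mem_union_right _ hI₀) _ (Finset.mem_union_left _ hX) ?_
    rintro e
    rw [← e] at hX
    exact Finset.disjoint_left.1 hd hX hI₀
  have h2 := hne I₀ (Finset.mem_union_right _ hI₀)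
  obtain ⟨l, hl⟩ := h2
  exact Finset.disjoint_left.1 h1 hl (Finset.mem_union_left _ hl)

lemma mem_sup_id {X : Finset (Finset (Fin d))} {l : Fin d} : l ∈ X.sup id ↔ ∃ I ∈ X, l ∈ I := by
  simp [Finset.mem_sup]

/-- Blocks moved out of `X` are merged into the block `I₀`, which becomes deterministic. -/
lemma IsPartitionPair.merge {U : Finset (Fin d)} {X L : Finset (Finset (Fin d))}
    (h : IsPartitionPair U X L) {I₀ : Finset (Fin d)} (hI₀ : I₀ ∈ L) {I : Finset (Finset (Fin d))}
    (hI : I ⊆ X) : IsPartitionPair U (insert (I₀ ∪ (X \ I).sup id) I) (L.erase I₀) := by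
  obtain ⟨hd, hne, hdisj, hU⟩ := h
  have hI₀ne := hne I₀ (Finset.mem_union_right _ hI₀)
  -- the merged block is disjoint from all the remaining ones
  have key : ∀ J, J ∈ I ∨ J ∈ L.erase I₀ → Disjoint (I₀ ∪ (X \ I).sup id) J := by
    intro J hJ
    have hJ' : J ∈ X ∪ L := by
      rcases hJ with hJ | hJ
      · exact Finset.mem_union_left _ (hI hJ)
      · exact Finset.mem_union_right _ (Finset.mem_of_mem_erase hJ)
    rw [Finset.disjoint_union_left]
    constructor
    · refine hdisj _ (Finset.mem_union_right _ hI₀) _ hJ' ?_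
      rintro rfl
      rcases hJ with hJ | hJ
      · exact Finset.disjoint_left.1 hd (hI hJ) hI₀
      · simp at hJ
    · rw [Finset.disjoint_left]
      intro l hl hlJ
      obtain ⟨K, hK, hlK⟩ := mem_sup_id.1 hl
      rw [Finset.mem_sdiff] at hK
      refine Finset.disjoint_left.1 (hdisj K (Finset.mem_union_left _ hK.1) J hJ' ?_) hlK hlJ
      rintro rfl
      rcases hJ with hJ | hJ
      · exact hK.2 hJ
      · exact Finset.disjoint_left.1 hd hK.1 (Finset.mem_of_mem_erase hJ)
  have hne' : (I₀ ∪ (X \ I).sup id).Nonempty := hI₀ne.mono Finset.subset_union_left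
  refine ⟨?_, ?_, ?_, ?_⟩
  · rw [Finset.disjoint_left]
    intro J hJ hJL
    rw [Finset.mem_insert] at hJ
    rcases hJ with rfl | hJ
    · have := key _ (Or.inr hJL)
      rw [disjoint_self] at this
      rw [this] at hne'
      simp at hne'
    · exact Finset.disjoint_left.1 hd (hI hJ) (Finset.mem_of_mem_erase hJL)
  · intro J hJ
    rw [Finset.mem_union, Finset.mem_insert] at hJ
    rcases hJ with (rfl | hJ) | hJ
    · exact hne'
    · exact hne J (Finset.mem_union_left _ (hI hJ))
    · exact hne J (Finset.mem_union_right _ (Finset.mem_of_mem_erase hJ))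
  · intro J hJ K hK hJK
    rw [Finset.insert_union, Finset.mem_insert, Finset.mem_union] at hJ hK
    have sub : ∀ J, J ∈ I ∨ J ∈ L.erase I₀ → J ∈ X ∪ L := by
      rintro J (hJ | hJ)
      · exact Finset.mem_union_left _ (hI hJ)
      · exact Finset.mem_union_right _ (Finset.mem_of_mem_erase hJ)
    rcases hJ with rfl | hJ <;> rcases hK with rfl | hK
    · exact absurd rfl hJK
    · exact key _ hK
    · exact (key _ hJ).symm
    · exact hdisj _ (sub _ hJ) _ (sub _ hK) hJK
  · rw [← hU]
    ext l
    simp only [mem_sup_id, Finset.mem_union, Finset.mem_insert, Finset.mem_erase]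
    constructor
    · rintro ⟨J, (rfl | hJ) | hJ, hl⟩
      · rw [Finset.mem_union, mem_sup_id] at hl
        rcases hl with hl | ⟨K, hK, hl⟩
        · exact ⟨I₀, Or.inr hI₀, hl⟩
        · exact ⟨K, Or.inl (Finset.mem_sdiff.1 hK).1, hl⟩
      · exact ⟨J, Or.inl (hI hJ), hl⟩
      · exact ⟨J, Or.inr hJ.2, hl⟩
    · rintro ⟨J, hJ | hJ, hl⟩
      · by_cases hJI : J ∈ I
        · exact ⟨J, Or.inl (Or.inr hJI), hl⟩
        · refine ⟨_, Or.inl (Or.inl rfl), ?_⟩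
          rw [Finset.mem_union, mem_sup_id]
          exact Or.inr ⟨J, Finset.mem_sdiff.2 ⟨hJ, hJI⟩, hl⟩
      · by_cases e : J = I₀
        · subst e
          exact ⟨_, Or.inl (Or.inl rfl), Finset.mem_union_left _ hl⟩
        · exact ⟨J, Or.inr ⟨e, hJ⟩, hl⟩

lemma IsPartitionPair.remove {U : Finset (Fin d)} {X L : Finset (Finset (Fin d))}
    (h : IsPartitionPair U X L) {I₀ : Finset (Fin d)} (hI₀ : I₀ ∈ L) :
    IsPartitionPair (U \ I₀) ∅ (X ∪ L.erase I₀) := by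
  obtain ⟨hd, hne, hdisj, hU⟩ := h
  have sub : X ∪ L.erase I₀ ⊆ X ∪ L := Finset.union_subset_union_right (Finset.erase_subset _ _)
  have hX : I₀ ∉ X := fun h => Finset.disjoint_left.1 hd h hI₀
  refine ⟨by simp, ?_, ?_, ?_⟩
  · intro J hJ
    rw [Finset.empty_union] at hJ
    exact hne J (sub hJ)
  · intro J hJ K hK
    rw [Finset.empty_union] at hJ hK
    exact hdisj J (sub hJ) K (sub hK)
  · rw [Finset.empty_union, ← hU]
    ext l
    rw [Finset.mem_sdiff, mem_sup_id, mem_sup_id]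
    constructor
    · rintro ⟨J, hJ, hl⟩
      refine ⟨⟨J, sub hJ, hl⟩, fun hl₀ => ?_⟩
      refine Finset.disjoint_left.1 (hdisj J (sub hJ) I₀ (Finset.mem_union_right _ hI₀) ?_) hl hl₀
      rintro rfl
      simp [hX] at hJ
    · rintro ⟨⟨J, hJ, hl⟩, hl₀⟩
      refine ⟨J, ?_, hl⟩
      have : J ≠ I₀ := by rintro rfl; exact hl₀ hl
      simp only [Finset.mem_union, Finset.mem_erase] at hJ ⊢
      tauto

lemma IsPartitionPair.insert_right {U : Finset (Fin d)} {X M : Finset (Finset (Fin d))}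
    {I₀ : Finset (Fin d)} (h : IsPartitionPair (U \ I₀) X M) (hne₀ : I₀.Nonempty) (hU₀ : I₀ ⊆ U) :
    I₀ ∉ M ∧ IsPartitionPair U X (insert I₀ M) := by
  obtain ⟨hd, hne, hdisj, hU⟩ := h
  have key : ∀ J ∈ X ∪ M, Disjoint I₀ J := by
    intro J hJ
    rw [Finset.disjoint_left]
    intro l hl hlJ
    have : l ∈ (X ∪ M).sup id := mem_sup_id.2 ⟨J, hJ, hlJ⟩
    rw [hU, Finset.mem_sdiff] at this
    exact this.2 hl
  have hnot : I₀ ∉ X ∪ M := by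
    intro hmem
    have := key _ hmem
    rw [disjoint_self] at this
    rw [this] at hne₀
    simp at hne₀
  rw [Finset.mem_union, not_or] at hnot
  refine ⟨hnot.2, ?_, ?_, ?_, ?_⟩
  · rw [Finset.disjoint_insert_right]; exact ⟨hnot.1, hd⟩
  · intro J hJ
    rw [Finset.union_insert, Finset.mem_insert] at hJ
    rcases hJ with rfl | hJ
    · exact hne₀
    · exact hne J hJ
  · intro J hJ K hK hJK
    rw [Finset.union_insert, Finset.mem_insert] at hJ hK
    rcases hJ with rfl | hJ <;> rcases hK with rfl | hK
    · exact absurd rfl hJK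
    · exact key _ hK
    · exact (key _ hJ).symm
    · exact hdisj _ hJ _ hK hJK
  · rw [Finset.union_insert, Finset.sup_insert, hU]
    simpa using Finset.union_sdiff_of_subset hU₀

end Partitions

/-! ### The induction step of the upper bound -/

section Upper

variable {d n : ℕ}

/-- The seminorm `z ↦ q (z * w)`. -/
noncomputable def qm (q : Seminorm ℝ (Wt d n)) (w : Wt d n) : Seminorm ℝ (Wt d n) :=
  q.comp (LinearMap.mulRight ℝ w)

@[simp] lemma qm_apply (q : Seminorm ℝ (Wt d n)) (w z : Wt d n) : qm q w z = q (z * w) := rfl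

lemma continuous_q_mon (q : Seminorm ℝ (Wt d n)) (z : Wt d n) (M : Finset (Finset (Fin d))) :
    Continuous (fun g : Om d n => q (z * mon M g)) :=
  (continuous_seminorm q).comp (continuous_const.mul (continuous_mon M))

lemma integrable_q_mon (q : Seminorm ℝ (Wt d n)) (z : Wt d n) (M : Finset (Finset (Fin d))) :
    Integrable (fun g => q (z * mon M g)) (𝔤 (GIdx d n)) := by
  have h : Integrable (fun g => ∑ i, |z i| * |mon M g i| * q (Pi.single i 1)) (𝔤 (GIdx d n)) :=
    integrable_finsetSum _ fun i _ => (((integrable_mon M i).abs).const_mul _).mul_const _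
  refine h.mono' (continuous_q_mon q z M).measurable.aestronglyMeasurable
    (Filter.Eventually.of_forall fun g => ?_)
  rw [Real.norm_of_nonneg (apply_nonneg _ _)]
  refine (seminorm_le_sum q _).trans (le_of_eq (Finset.sum_congr rfl fun i _ => ?_))
  rw [Pi.mul_apply, abs_mul]

/-- The averaged seminorm `z ↦ 𝔼 q (z * mon {I₀} g)`. -/
noncomputable def qi (q : Seminorm ℝ (Wt d n)) (I₀ : Finset (Fin d)) : Seminorm ℝ (Wt d n) :=
  Seminorm.of (fun z => ∫ g, q (z * mon {I₀} g) ∂(𝔤 (GIdx d n)))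
    (fun x y => by
      rw [← integral_add (integrable_q_mon q x _) (integrable_q_mon q y _)]
      refine integral_mono (integrable_q_mon q _ _)
        ((integrable_q_mon q x _).add (integrable_q_mon q y _)) fun g => ?_
      simp only [add_mul]
      exact map_add_le_add q _ _)
    (fun a x => by
      simp only [smul_mul_assoc, map_smul_eq_mul]
      rw [integral_const_mul])

lemma ofReal_qi (q : Seminorm ℝ (Wt d n)) (I₀ : Finset (Fin d)) (z : Wt d n) :
    ENNReal.ofReal (qi q I₀ z) = ∫⁻ g, ENNReal.ofReal (q (z * mon {I₀} g)) ∂(𝔤 (GIdx d n)) :=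
  ofReal_integral_eq_lintegral_ofReal (integrable_q_mon q z _)
    (Filter.Eventually.of_forall fun _ => apply_nonneg _ _)

/-- `√p ^ |X|` times the supremum of `q` over the deterministic blocks `X`, with the random blocks `L` frozen
at `g`. -/
noncomputable def SV (q : Seminorm ℝ (Wt d n)) (p : ℝ) (X L : Finset (Finset (Fin d)))
    (g : Om d n) : ℝ≥0∞ :=
  ⨆ x ∈ BB n X, ENNReal.ofReal (√p ^ X.card * q (mon X x * mon L g))

lemma measurable_SV (q : Seminorm ℝ (Wt d n)) (p : ℝ) (X L : Finset (Finset (Fin d))) :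
    Measurable (SV q p X L) := by
  refine LowerSemicontinuous.measurable ?_
  unfold SV
  refine lowerSemicontinuous_iSup fun x => lowerSemicontinuous_iSup fun _ => ?_
  exact (ENNReal.continuous_ofReal.comp
    (continuous_const.mul (continuous_q_mon q _ L))).lowerSemicontinuous

/-- The `p`-th moment of `SV`. -/
noncomputable def VV (q : Seminorm ℝ (Wt d n)) (p : ℝ) (X L : Finset (Finset (Fin d))) : ℝ≥0∞ :=
  ∫⁻ g, SV q p X L g ^ p ∂(𝔤 (GIdx d n))

/-- `B` bounds all the mixed norms of the seminorm `q` over partition pairs of `U`. -/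
def HB (q : Seminorm ℝ (Wt d n)) (p : ℝ) (U : Finset (Fin d)) (B : ℝ≥0∞) : Prop :=
  ∀ X M : Finset (Finset (Fin d)), IsPartitionPair U X M → ∀ x ∈ BB n X,
    ∫⁻ ω, ENNReal.ofReal (√p ^ X.card * q (mon X x * mon M ω)) ∂(𝔤 (GIdx d n)) ≤ B

lemma mon_splice_insert {I₀ : Finset (Fin d)} {M : Finset (Finset (Fin d))} (h : I₀ ∉ M)
    (ω g : Om d n) : mon (insert I₀ M) (splice (blk n M) ω g) = mon {I₀} g * mon M ω := by
  rw [mon_insert h, mon_splice_sub (le_refl M), mon_splice_disj (by simpa using h)]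

/-- Averaging a Gaussian block `I₀` out only removes norms from the family controlled by `B`. -/
lemma HB_qi {q : Seminorm ℝ (Wt d n)} {p : ℝ} {U : Finset (Fin d)} {B : ℝ≥0∞}
    (h : HB q p U B) {I₀ : Finset (Fin d)} (hne : I₀.Nonempty) (hU : I₀ ⊆ U) :
    HB (qi q I₀) p (U \ I₀) B := by
  intro X M hXM x hx
  obtain ⟨hM, hp⟩ := hXM.insert_right hne hU
  refine le_trans (le_of_eq ?_) (h X _ hp x hx)
  have hm : Measurable fun ω : Om d n =>
      ENNReal.ofReal (√p ^ X.card * q (mon X x * mon (insert I₀ M) ω)) :=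
    (ENNReal.continuous_ofReal.comp (continuous_const.mul (continuous_q_mon q _ _))).measurable
  rw [← gm_splice (blk n M) hm]
  refine lintegral_congr fun ω => ?_
  rw [ENNReal.ofReal_mul (by positivity), ofReal_qi, ← lintegral_const_mul' _ _ (by finiteness)]
  refine lintegral_congr fun g => ?_
  rw [← ENNReal.ofReal_mul (by positivity), mon_splice_insert hM, mul_assoc, mul_comm (mon M ω)]

@[simp] lemma SV_empty (q : Seminorm ℝ (Wt d n)) (p : ℝ) (L : Finset (Finset (Fin d)))
    (g : Om d n) : SV q p ∅ L g = ENNReal.ofReal (q (mon L g)) := by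
  simp [SV, BB]

/-- A crude power mean inequality. -/
lemma sum_rpow_le {ι : Type*} (s : Finset ι) (a : ι → ℝ≥0∞) {p : ℝ} (hp : 1 ≤ p) :
    (∑ i ∈ s, a i) ^ p ≤ (s.card : ℝ≥0∞) ^ p * ∑ i ∈ s, a i ^ p := by
  have hp0 : 0 < p := by linarith
  have h1 : ∑ i ∈ s, a i ≤ s.card * (∑ i ∈ s, a i ^ p) ^ (1 / p) := by
    rw [← nsmul_eq_mul]
    refine Finset.sum_le_card_nsmul _ _ _ fun i hi => ?_
    rw [one_div, ENNReal.le_rpow_inv_iff hp0]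
    exact Finset.single_le_sum (f := fun i => a i ^ p) (fun _ _ => zero_le) hi
  calc _ ≤ _ := ENNReal.rpow_le_rpow h1 hp0.le
    _ = _ := by
      rw [ENNReal.mul_rpow_of_nonneg _ _ hp0.le, ← ENNReal.rpow_mul, one_div_mul_cancel hp0.ne',
        ENNReal.rpow_one]

/-- The key estimate applied conditionally on the Gaussian blocks other than `I₀`. Adding `B` to the
random bound keeps it positive. -/
lemma VV_step {q : Seminorm ℝ (Wt d n)} {p : ℝ} (hp : 2 ≤ p) {U : Finset (Fin d)} {B : ℝ≥0∞}
    (hB : B ≠ 0) {X L : Finset (Finset (Fin d))} (hXL : IsPartitionPair U X L)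
    {I₀ : Finset (Fin d)} (hI₀ : I₀ ∈ L) :
    VV q p X L ≤ KK d ^ p * (VV (qi q I₀) p ∅ (X ∪ L.erase I₀) +
      (2 ^ p * (B ^ p + (2 ^ X.card : ℝ≥0∞) ^ p *
        ∑ I ∈ X.powerset, VV q p (insert (I₀ ∪ (X \ I).sup id) I) (L.erase I₀)))) := by
  have hp0 : 0 < p := by linarith
  obtain ⟨L', hL'⟩ : ∃ L', L' = L.erase I₀ := ⟨_, rfl⟩
  rw [← hL']
  have hLins : L = insert I₀ L' := by rw [hL', Finset.insert_erase hI₀]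
  have hI₀L' : I₀ ∉ L' := by simp [hL']
  have hXL' : Disjoint X L' := hL' ▸ hXL.1.mono_right (Finset.erase_subset _ _)
  set s : ℝ≥0∞ := ENNReal.ofReal √p with hs
  have hs0 : s ≠ 0 := by simp [hs, hp0]
  have hst : s ≠ ⊤ := by simp [hs]
  set T : Om d n → ℝ≥0∞ := fun g' =>
    B + ∑ I ∈ X.powerset, SV q p (insert (I₀ ∪ (X \ I).sup id) I) L' g' with hT
  have hTm : Measurable T := by
    refine measurable_const.add (Finset.measurable_sum _ fun I _ => measurable_SV ..)
  -- conditionally on the variables of `L'`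
  have hcond : ∀ g' : Om d n, ∫⁻ g, SV q p X L (splice (blk n L') g' g) ^ p ∂(𝔤 (GIdx d n)) ≤
      KK d ^ p * (∫⁻ γ, (SV (qi q I₀) p ∅ (X ∪ L') (splice (blk n L') g' γ)) ^ p ∂(𝔤 (GIdx d n)) +
        T g' ^ p) := by
    intro g'
    have hk := key_lemma (qm q (mon L' g')) X I₀ hp (D₀ := T g' / s) ?_ ?_
    · rw [ENNReal.mul_div_cancel hs0 hst] at hk
      convert hk using 1
      · refine lintegral_congr fun g => ?_
        unfold SV
        simp only [hLins, mon_splice_insert hI₀L', qm_apply, mul_assoc]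
      · congr 2
        refine lintegral_congr fun γ => ?_
        congr 1
        rw [SV_empty, ofReal_qi, mon_union hXL', mon_splice_disj hXL',
          mon_splice_sub (le_refl L')]
        refine lintegral_congr fun g => ?_
        simp only [qm_apply, mul_assoc, mul_comm (mon {I₀} g)]
    · refine (ENNReal.div_pos ?_ hst).ne'
      simp [hT, hB]
    · intro I hI x hx y hy
      rw [ENNReal.le_div_iff_mul_le (Or.inl hs0) (Or.inl hst)]
      have hIX := Finset.mem_powerset.1 hI
      have hnot := hXL.not_mem hI₀ hIX
      refine le_trans ?_ (le_add_self.trans' (Finset.single_le_sum (f := fun I =>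
        SV q p (insert (I₀ ∪ (X \ I).sup id) I) L' g') (fun _ _ => zero_le) hI))
      have hz : splice (blk n I) x y ∈ BB n (insert (I₀ ∪ (X \ I).sup id) I) := by
        intro J hJ
        rw [Finset.mem_insert] at hJ
        rcases hJ with rfl | hJ
        · have : ∀ v, (⟨I₀ ∪ (X \ I).sup id, v⟩ : GIdx d n) ∉ blk n I := fun v => hnot
          simp only [splice, this, if_false]
          exact hy _ (Finset.mem_singleton_self _)
        · have : ∀ v, (⟨J, v⟩ : GIdx d n) ∈ blk n I := fun v => hJ
          simp only [splice, this, if_true]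
          exact hx _ hJ
      refine le_trans (le_of_eq ?_) (le_iSup₂ (f := fun x _ => ENNReal.ofReal
        (√p ^ (insert (I₀ ∪ (X \ I).sup id) I).card *
          q (mon (insert (I₀ ∪ (X \ I).sup id) I) x * mon L' g'))) _ hz)
      rw [Finset.card_insert_of_notMem hnot, mon_splice_insert hnot, hs, mul_comm,
        ← ENNReal.ofReal_mul (by positivity), qm_apply, mul_comm (mon I x), pow_succ']
      ring_nf
  have hTp : ∀ g', T g' ^ p ≤ 2 ^ p * (B ^ p + (2 ^ X.card : ℝ≥0∞) ^ p *
      ∑ I ∈ X.powerset, SV q p (insert (I₀ ∪ (X \ I).sup id) I) L' g' ^ p) := by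
    intro g'
    have h1 := sum_rpow_le X.powerset
      (fun I => SV q p (insert (I₀ ∪ (X \ I).sup id) I) L' g') (by linarith : 1 ≤ p)
    have h2 := sum_rpow_le (Finset.univ : Finset Bool) (fun b => if b then B else
      ∑ I ∈ X.powerset, SV q p (insert (I₀ ∪ (X \ I).sup id) I) L' g') (by linarith : 1 ≤ p)
    simp only [Fintype.sum_bool, Finset.card_univ, Fintype.card_bool, if_true, Bool.false_eq_true,
      if_false] at h2
    rw [Finset.card_powerset] at h1
    push_cast at h1 h2
    refine h2.trans ?_
    gcongr
  have hmS : ∀ q' : Seminorm ℝ (Wt d n), ∀ X L : Finset (Finset (Fin d)),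
      Measurable fun g => SV q' p X L g ^ p := fun q' X L => (measurable_SV q' p X L).pow_const p
  calc VV q p X L = ∫⁻ g', ∫⁻ g, SV q p X L (splice (blk n L') g' g) ^ p ∂(𝔤 (GIdx d n))
        ∂(𝔤 (GIdx d n)) := (gm_splice (blk n L') (hmS q X L)).symm
    _ ≤ ∫⁻ g', KK d ^ p * (∫⁻ γ, (SV (qi q I₀) p ∅ (X ∪ L') (splice (blk n L') g' γ)) ^ p
          ∂(𝔤 (GIdx d n)) + T g' ^ p) ∂(𝔤 (GIdx d n)) := lintegral_mono hcond
    _ = KK d ^ p * (VV (qi q I₀) p ∅ (X ∪ L') + ∫⁻ g', T g' ^ p ∂(𝔤 (GIdx d n))) := by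
        rw [lintegral_const_mul' _ _ (by simp [KK_ne_top, hp0.le]),
          lintegral_add_right _ (hTm.pow_const p), gm_splice (blk n L') (hmS _ _ _)]
        rfl
    _ ≤ _ := by
        gcongr
        refine (lintegral_mono hTp).trans (le_of_eq ?_)
        rw [lintegral_const_mul' _ _ (by finiteness), lintegral_add_left measurable_const,
          lintegral_const_mul' _ _ (by finiteness), lintegral_finsetSum _ fun I _ => hmS _ _ _]
        simp [VV]

end Upper

/-! ### Upper bound for mixed moments -/

section Upper2

variable {d n : ℕ}

/-- The factor lost in one step of the induction; `2 ^ (2 ^ d)` bounds the number of subfamilies of `X`. -/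
noncomputable def MM (d : ℕ) : ℝ≥0∞ := KK d * (8 * (2 ^ (2 ^ d)) ^ 2)

lemma MM_ne_top (d : ℕ) : MM d ≠ ⊤ := by
  have := KK_ne_top d
  unfold MM; finiteness

lemma one_le_KK (d : ℕ) : 1 ≤ KK d := by
  unfold KK
  have h1 : (1:ℝ≥0∞) ≤ ENNReal.ofReal (Real.exp (2 ^ d)) := by
    rw [ENNReal.one_le_ofReal]; exact Real.one_le_exp (by positivity)
  have h2 : (1:ℝ≥0∞) ≤ 4 ^ (2 ^ d + 1) := one_le_pow₀ (by norm_num)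
  exact one_le_mul (one_le_mul (by norm_num) h1) (one_le_mul (by norm_num) h2)

lemma one_le_MM (d : ℕ) : 1 ≤ MM d := by
  unfold MM
  have h2 : (1:ℝ≥0∞) ≤ (2 ^ (2 ^ d)) ^ 2 := one_le_pow₀ (one_le_pow₀ (by norm_num))
  exact one_le_mul (one_le_KK d) (one_le_mul (by norm_num) h2)

lemma step_arith {p : ℝ} (hp : 1 ≤ p) {K N W b : ℝ≥0∞} (hN : 1 ≤ N) (hb : b ≤ W) :
    K ^ p * (W + 2 ^ p * (b + N ^ p * (N * W))) ≤ (K * (8 * N ^ 2)) ^ p * W := by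
  have hp0 : 0 ≤ p := by linarith
  have h1 : N ≤ N ^ p := by simpa using ENNReal.rpow_le_rpow_of_exponent_le hN hp
  have h1' : 1 ≤ N ^ p := hN.trans h1
  have h2 : (2:ℝ≥0∞) ≤ 2 ^ p := by
    simpa using ENNReal.rpow_le_rpow_of_exponent_le (by norm_num : (1:ℝ≥0∞) ≤ 2) hp
  have h2' : (1:ℝ≥0∞) ≤ 2 ^ p := le_trans (by norm_num) h2
  have h8 : (8:ℝ≥0∞) ^ p = 2 ^ p * 2 ^ p * 2 ^ p := by
    rw [← ENNReal.mul_rpow_of_nonneg _ _ hp0, ← ENNReal.mul_rpow_of_nonneg _ _ hp0]; norm_num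
  have hNN : (N ^ 2) ^ p = N ^ p * N ^ p := by
    rw [sq, ENNReal.mul_rpow_of_nonneg _ _ hp0]
  rw [ENNReal.mul_rpow_of_nonneg _ _ hp0, ENNReal.mul_rpow_of_nonneg _ _ hp0, h8, hNN, mul_assoc]
  gcongr
  generalize (2:ℝ≥0∞) ^ p = t at *
  generalize N ^ p = m at *
  have hmm : 1 ≤ m * m := one_le_mul h1' h1'
  calc W + t * (b + m * (N * W)) ≤ W + t * (W + m * (m * W)) := by gcongr
    _ = W + t * (1 * W + m * m * W) := by ring
    _ ≤ W + t * (m * m * W + m * m * W) := by gcongr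
    _ = 1 * 1 * W + 2 * t * (m * m * W) := by ring
    _ ≤ 1 * (m * m) * W + t * t * (m * m * W) := by gcongr
    _ ≤ (t * t) * (m * m) * W + t * t * (m * m * W) := by
        gcongr; exact one_le_mul h2' h2'
    _ = 2 * (t * t * (m * m) * W) := by ring
    _ ≤ t * (t * t * (m * m) * W) := by gcongr
    _ = _ := by ring

/-- Upper bound for mixed moments, by induction on a rank which linearises the lexicographic order
on `(|X| + |L|, |L|)`. -/
lemma VV_bound {p : ℝ} (hp : 2 ≤ p) (r : ℕ) : ∀ {q : Seminorm ℝ (Wt d n)} {U : Finset (Fin d)}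
    {B : ℝ≥0∞} (_ : B ≠ 0) (_ : HB q p U B) {X L : Finset (Finset (Fin d))}
    (_ : IsPartitionPair U X L) (_ : (X.card + L.card) * (2 ^ d + 1) + L.card ≤ r),
    VV q p X L ≤ (MM d ^ r * B) ^ p := by
  have hp0 : 0 < p := by linarith
  have base : ∀ (r : ℕ) {q : Seminorm ℝ (Wt d n)} {U : Finset (Fin d)} {B : ℝ≥0∞}
      (_ : HB q p U B) {X : Finset (Finset (Fin d))} (_ : IsPartitionPair U X ∅),
      VV q p X ∅ ≤ (MM d ^ r * B) ^ p := by
    intro r q U B hHB X hX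
    have h1 : ∀ g, SV q p X ∅ g ≤ MM d ^ r * B := by
      intro g
      refine iSup₂_le fun x hx => ?_
      have := hHB X ∅ hX x hx
      simp only [mon_empty, lintegral_const, measure_univ, mul_one] at this ⊢
      exact this.trans (le_mul_of_one_le_left' (one_le_pow₀ (one_le_MM d)))
    calc VV q p X ∅ ≤ ∫⁻ g, (MM d ^ r * B) ^ p ∂(𝔤 (GIdx d n)) :=
          lintegral_mono fun g => ENNReal.rpow_le_rpow (h1 g) hp0.le
      _ = _ := by simp
  induction r with
  | zero =>
    intro q U B hB hHB X L hXL hr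
    have : L = ∅ := by
      rw [← Finset.card_eq_zero]; omega
    subst this
    exact base 0 hHB hXL
  | succ r ih =>
    intro q U B hB hHB X L hXL hr
    rcases Finset.eq_empty_or_nonempty L with rfl | ⟨I₀, hI₀⟩
    · exact base _ hHB hXL
    have hL1 : 1 ≤ L.card := Finset.card_pos.2 ⟨I₀, hI₀⟩
    have hLe : (L.erase I₀).card = L.card - 1 := Finset.card_erase_of_mem hI₀
    have hI₀ne : I₀.Nonempty := hXL.2.1 I₀ (Finset.mem_union_right _ hI₀)
    have hI₀U : I₀ ⊆ U := by
      rw [← hXL.2.2.2]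
      exact Finset.le_sup (f := id) (Finset.mem_union_right X hI₀)
    -- the number of blocks decreases in this term, the number of random blocks in the next one
    have h1 : VV (qi q I₀) p ∅ (X ∪ L.erase I₀) ≤ (MM d ^ r * B) ^ p := by
      refine ih hB (HB_qi hHB hI₀ne hI₀U) (hXL.remove hI₀) ?_
      have hc := card_le_two_pow (X ∪ L.erase I₀)
      have hc' := Finset.card_union_le X (L.erase I₀)
      rw [Finset.card_empty, zero_add]
      have : (X ∪ L.erase I₀).card * (2 ^ d + 1) ≤ (X.card + (L.card - 1)) * (2 ^ d + 1) :=
        Nat.mul_le_mul_right _ (by omega)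
      obtain ⟨l, hl⟩ : ∃ l, L.card = l + 1 := ⟨L.card - 1, by omega⟩
      rw [hl] at this hr
      have e1 : (X.card + (l + 1)) * (2 ^ d + 1) = (X.card + l) * (2 ^ d + 1) + (2 ^ d + 1) := by
        ring
      simp only [Nat.add_sub_cancel] at this
      omega
    have h2 : ∀ I ∈ X.powerset, VV q p (insert (I₀ ∪ (X \ I).sup id) I) (L.erase I₀) ≤
        (MM d ^ r * B) ^ p := by
      intro I hI
      have hIX := Finset.mem_powerset.1 hI
      refine ih hB hHB (hXL.merge hI₀ hIX) ?_
      rw [Finset.card_insert_of_notMem (hXL.not_mem hI₀ hIX), hLe]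
      have hc : I.card ≤ X.card := Finset.card_le_card hIX
      have : (I.card + 1 + (L.card - 1)) * (2 ^ d + 1) ≤ (X.card + L.card) * (2 ^ d + 1) :=
        Nat.mul_le_mul_right _ (by omega)
      omega
    refine (VV_step hp hB hXL hI₀).trans ?_
    have hN1 : (1:ℝ≥0∞) ≤ 2 ^ (2 ^ d) := one_le_pow₀ (by norm_num)
    have hNX : (2:ℝ≥0∞) ^ X.card ≤ 2 ^ (2 ^ d) :=
      pow_le_pow_right₀ (by norm_num) (card_le_two_pow X)
    have hsum : ∑ I ∈ X.powerset, VV q p (insert (I₀ ∪ (X \ I).sup id) I) (L.erase I₀) ≤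
        2 ^ (2 ^ d) * (MM d ^ r * B) ^ p := by
      refine (Finset.sum_le_card_nsmul _ _ _ h2).trans ?_
      rw [nsmul_eq_mul, Finset.card_powerset]
      push_cast
      gcongr
    calc _ ≤ KK d ^ p * ((MM d ^ r * B) ^ p + 2 ^ p * (B ^ p + (2 ^ (2 ^ d)) ^ p *
          (2 ^ (2 ^ d) * (MM d ^ r * B) ^ p))) := by gcongr
      _ ≤ (KK d * (8 * (2 ^ (2 ^ d)) ^ 2)) ^ p * (MM d ^ r * B) ^ p := by
          refine step_arith (by linarith) hN1 ?_
          gcongr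
          exact le_mul_of_one_le_left' (one_le_pow₀ (one_le_MM d))
      _ = _ := by
          rw [← ENNReal.mul_rpow_of_nonneg _ _ hp0.le, pow_succ' (MM d), mul_assoc (MM d)]
          rfl

end Upper2

/-! ### The upper bound -/

section Final

variable {d n : ℕ} {E : Type*} [NormedAddCommGroup E] [NormedSpace ℝ E]

/-- The seminorm `z ↦ ‖∑ i, z i • A i‖`. -/
noncomputable def qA (A : (Fin d → Fin n) → E) : Seminorm ℝ (Wt d n) :=
  (normSeminorm ℝ E).comp (Fintype.linearCombination ℝ A)

lemma qA_apply (A : (Fin d → Fin n) → E) (z : Wt d n) : qA A z = ‖∑ i, z i • A i‖ := by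
  simp [qA, Fintype.linearCombination_apply]

/-- The singletons of elements of `S`. -/
def sing (S : Finset (Fin d)) : Finset (Finset (Fin d)) := S.image fun l => {l}

lemma chaosNorm_eq (A : (Fin d → Fin n) → E) (P' P : Finset (Finset (Fin d))) :
    chaosNorm A P' P = sSup {r : ℝ | ∃ x ∈ BB n P,
      r = ∫ ω, qA A (mon P x * mon P' ω) ∂(𝔤 (GIdx d n))} := by
  unfold chaosNorm
  congr 1
  ext r
  constructor
  · rintro ⟨x, hx, rfl⟩
    refine ⟨fun a => x a.1 a.2, hx, ?_⟩
    simp only [qA_apply]; rfl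
  · rintro ⟨x, hx, rfl⟩
    refine ⟨fun I v => x ⟨I, v⟩, hx, ?_⟩
    simp only [qA_apply]; rfl

lemma abs_mon_le_one {P : Finset (Finset (Fin d))} {x : Om d n} (hx : x ∈ BB n P)
    (i : Fin d → Fin n) : |mon P x i| ≤ 1 := by
  unfold mon
  rw [Finset.abs_prod]
  refine Finset.prod_le_one (fun _ _ => abs_nonneg _) fun I hI => ?_
  rw [← sq_le_one_iff_abs_le_one]
  exact (Finset.single_le_sum (f := fun v => x ⟨I, v⟩ ^ 2) (fun v _ => sq_nonneg _)
    (Finset.mem_univ _)).trans (hx I hI)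

/-- The set whose supremum defines `chaosNorm` is bounded above, so the supremum is a genuine one. -/
lemma chaosNorm_bdd (A : (Fin d → Fin n) → E) (P' P : Finset (Finset (Fin d))) :
    BddAbove {r : ℝ | ∃ x ∈ BB n P,
      r = ∫ ω, qA A (mon P x * mon P' ω) ∂(𝔤 (GIdx d n))} := by
  refine ⟨∫ ω, ∑ i, |mon P' ω i| * qA A (Pi.single i 1) ∂(𝔤 (GIdx d n)), ?_⟩
  rintro r ⟨x, hx, rfl⟩
  refine integral_mono (integrable_q_mon _ _ _)
    (integrable_finsetSum _ fun i _ => ((integrable_mon P' i).abs).mul_const _) fun ω => ?_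
  refine (seminorm_le_sum _ _).trans (Finset.sum_le_sum fun i _ => ?_)
  rw [Pi.mul_apply, abs_mul]
  have := abs_mon_le_one hx i
  gcongr
  exact mul_le_of_le_one_left (abs_nonneg _) this

lemma le_chaosNorm (A : (Fin d → Fin n) → E) (P' P : Finset (Finset (Fin d))) {x : Om d n}
    (hx : x ∈ BB n P) : ∫ ω, qA A (mon P x * mon P' ω) ∂(𝔤 (GIdx d n)) ≤ chaosNorm A P' P := by
  rw [chaosNorm_eq]
  exact le_csSup (chaosNorm_bdd A P' P) ⟨x, hx, rfl⟩

lemma zero_mem_BB (P : Finset (Finset (Fin d))) : (0 : Om d n) ∈ BB n P := by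
  intro I _; simp

lemma chaosNorm_nonneg (A : (Fin d → Fin n) → E) (P' P : Finset (Finset (Fin d))) :
    0 ≤ chaosNorm A P' P :=
  (integral_nonneg fun _ => apply_nonneg _ _).trans (le_chaosNorm A P' P (zero_mem_BB P))

/-- The `p`-th moment of a homogeneous decoupled chaos, in terms of the singleton blocks. -/
noncomputable def EE (q : Seminorm ℝ (Wt d n)) (p : ℝ) (U : Finset (Fin d)) : ℝ≥0∞ :=
  ∫⁻ ω, ENNReal.ofReal (q (mon (sing U) ω)) ^ p ∂(𝔤 (GIdx d n))

lemma mon_sing (S : Finset (Fin d)) (ω : Om d n) (i : Fin d → Fin n) :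
    mon (sing S) ω i = ∏ k ∈ S, ω ⟨{k}, fun _ => i k⟩ := by
  unfold mon sing
  rw [Finset.prod_image (by intro a _ b _ h; simpa using h)]
  refine Finset.prod_congr rfl fun k _ => ?_
  congr 2
  funext l
  have := Finset.mem_singleton.1 l.2
  rw [this]

lemma continuous_decChaos (A : (Fin d → Fin n) → E) : Continuous (decChaos A) := by
  unfold decChaos; fun_prop

/-- The moment of the decoupled chaos, rewritten as an integral over the singleton blocks among all block
variables. -/
lemma momP_eq (A : (Fin d → Fin n) → E) {p : ℝ} (hp : 0 ≤ p) :
    momP A p = (EE (qA A) p Finset.univ).toReal ^ (1 / p) := by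
  unfold momP
  have hinj : Function.Injective (fun a : Fin d × Fin n => (⟨{a.1}, fun _ => a.2⟩ : GIdx d n)) := by
    rintro ⟨k, j⟩ ⟨k', j'⟩ h
    simp only [Sigma.mk.injEq, Finset.singleton_inj] at h
    obtain ⟨rfl, h⟩ := h
    have := congrFun (eq_of_heq h) ⟨k, by simp⟩
    exact Prod.ext rfl this
  have hm : Measurable fun ω : Fin d × Fin n → ℝ => ENNReal.ofReal ‖decChaos A ω‖ ^ p :=
    ((continuous_decChaos A).norm.measurable.ennreal_ofReal).pow_const p
  congr 1
  rw [integral_eq_lintegral_of_nonneg_ae (Filter.Eventually.of_forall fun ω => by positivity)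
    ((continuous_decChaos A).norm.measurable.pow_const p).aestronglyMeasurable]
  congr 1
  simp_rw [← ENNReal.ofReal_rpow_of_nonneg (norm_nonneg _) hp]
  refine (gm_coord hinj hm).symm.trans ?_
  unfold EE
  refine lintegral_congr fun ω => ?_
  congr 2
  rw [qA_apply]
  unfold decChaos
  simp_rw [mon_sing]

/-- The right-hand side of the upper bound. -/
noncomputable def SS (A : (Fin d → Fin n) → E) (p : ℝ) : ℝ :=
  ∑ PP ∈ partitionPairs d, p ^ ((PP.1.card : ℝ) / 2) * chaosNorm A PP.2 PP.1

lemma rpow_half {p : ℝ} (hp : 0 ≤ p) (k : ℕ) : p ^ ((k : ℝ) / 2) = √p ^ k := by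
  rw [Real.sqrt_eq_rpow, ← Real.rpow_natCast, ← Real.rpow_mul hp]
  congr 1; ring

lemma SS_nonneg (A : (Fin d → Fin n) → E) {p : ℝ} (hp : 0 ≤ p) : 0 ≤ SS A p :=
  Finset.sum_nonneg fun _ _ => mul_nonneg (by positivity) (chaosNorm_nonneg _ _ _)

lemma HB_SS (A : (Fin d → Fin n) → E) {p : ℝ} (hp : 0 ≤ p) :
    HB (qA A) p Finset.univ (ENNReal.ofReal (SS A p)) := by
  intro X M hXM x hx
  have hi := (integrable_q_mon (qA A) (mon X x) M).const_mul (√p ^ X.card)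
  rw [← ofReal_integral_eq_lintegral_ofReal hi (Filter.Eventually.of_forall fun _ =>
    mul_nonneg (by positivity) (apply_nonneg _ _))]
  refine ENNReal.ofReal_le_ofReal ?_
  rw [integral_const_mul]
  have h1 : (X, M) ∈ partitionPairs d := by simp [partitionPairs, hXM]
  refine le_trans ?_ (Finset.single_le_sum (f := fun PP : Finset (Finset (Fin d)) ×
    Finset (Finset (Fin d)) => p ^ ((PP.1.card : ℝ) / 2) * chaosNorm A PP.2 PP.1)
    (fun _ _ => mul_nonneg (by positivity) (chaosNorm_nonneg _ _ _)) h1)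
  simp only [rpow_half hp]
  gcongr
  exact le_chaosNorm A M X hx

lemma isPartition_sing (U : Finset (Fin d)) : IsPartition U (sing U) := by
  refine ⟨?_, ?_, ?_⟩
  · intro I hI
    simp only [sing, Finset.mem_image] at hI
    obtain ⟨l, _, rfl⟩ := hI
    simp
  · intro I hI J hJ hne
    simp only [sing, Finset.mem_image] at hI hJ
    obtain ⟨l, _, rfl⟩ := hI
    obtain ⟨m, _, rfl⟩ := hJ
    simpa using fun h => hne (by rw [h])
  · ext l
    simp [sing]

/-- The constant of the upper bound, for `p ≥ 2`. -/
noncomputable def CU (d : ℕ) : ℝ≥0∞ := MM d ^ (2 ^ d * (2 ^ d + 1) + 2 ^ d)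

lemma CU_ne_top (d : ℕ) : CU d ≠ ⊤ := by
  have := MM_ne_top d
  unfold CU; finiteness

lemma EE_le (A : (Fin d → Fin n) → E) {p : ℝ} (hp : 2 ≤ p) :
    EE (qA A) p Finset.univ ≤ (CU d * ENNReal.ofReal (SS A p)) ^ p := by
  have hp0 : 0 < p := by linarith
  have h1 : ∀ ε : ℝ≥0, 0 < ε → EE (qA A) p Finset.univ ≤
      (CU d * (ENNReal.ofReal (SS A p) + ε)) ^ p := by
    intro ε hε
    have hHB : HB (qA A) p Finset.univ (ENNReal.ofReal (SS A p) + ε) :=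
      fun X M hXM x hx => (HB_SS A hp0.le X M hXM x hx).trans le_self_add
    have hc := card_le_two_pow (sing (Finset.univ : Finset (Fin d)))
    have h := VV_bound hp (2 ^ d * (2 ^ d + 1) + 2 ^ d) (by simp [hε.ne']) hHB (X := ∅)
      (L := sing Finset.univ) ⟨by simp, by simpa using isPartition_sing _⟩ (by
        rw [Finset.card_empty, zero_add]; gcongr)
    unfold VV at h
    simp only [SV_empty] at h
    exact h
  have h2 : ∀ ε : ℝ≥0, 0 < ε → EE (qA A) p Finset.univ ^ (1 / p) ≤
      CU d * ENNReal.ofReal (SS A p) + CU d * ε := by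
    intro ε hε
    rw [← mul_add, one_div, ENNReal.rpow_inv_le_iff hp0]
    exact h1 ε hε
  rw [← ENNReal.rpow_inv_le_iff hp0, ← one_div]
  have ht : Filter.Tendsto (fun ε : ℝ≥0 => CU d * ENNReal.ofReal (SS A p) + CU d * (ε : ℝ≥0∞))
      (nhdsWithin 0 (Set.Ioi 0)) (nhds (CU d * ENNReal.ofReal (SS A p) + CU d * ((0 : ℝ≥0) : ℝ≥0∞))) := by
    refine Filter.Tendsto.const_add _ (ENNReal.Tendsto.const_mul ?_ (Or.inr (CU_ne_top d)))
    exact (ENNReal.tendsto_coe.2 Filter.tendsto_id).mono_left nhdsWithin_le_nhds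
  simp only [ENNReal.coe_zero, mul_zero, add_zero] at ht
  refine ge_of_tendsto ht ?_
  filter_upwards [self_mem_nhdsWithin] with ε hε using h2 ε hε

/-- Extension of `EE_le` to `1 ≤ p`, by comparison with the second moment when `p ≤ 2`. -/
lemma EE_le' (A : (Fin d → Fin n) → E) {p : ℝ} (hp : 1 ≤ p) :
    EE (qA A) p Finset.univ ≤ (CU d * 2 ^ (2 ^ d) * ENNReal.ofReal (SS A p)) ^ p := by
  have hp0 : 0 < p := by linarith
  by_cases h2 : 2 ≤ p
  · refine (EE_le A h2).trans ?_
    gcongr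
    exact le_mul_of_one_le_right' (one_le_pow₀ (by norm_num))
  push Not at h2
  have hm : Measurable fun ω : Om d n => ENNReal.ofReal (qA A (mon (sing Finset.univ) ω)) ^ p :=
    ((((continuous_seminorm (qA A)).comp (continuous_mon _)).measurable).ennreal_ofReal).pow_const p
  have hr : 1 ≤ 2 / p := by rw [le_div_iff₀ hp0]; linarith
  have h := lintegral_rpow_jensen' (𝔤 (GIdx d n)) hm.aemeasurable hr
  have e : ∀ a : ℝ≥0∞, (a ^ p) ^ (2 / p) = a ^ (2:ℝ) := fun a => by
    rw [← ENNReal.rpow_mul]; congr 1; field_simp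
  simp only [e] at h
  have h3 := h.trans (EE_le A le_rfl)
  have hSS : SS A 2 ≤ 2 ^ (2 ^ d) * SS A p := by
    unfold SS
    rw [Finset.mul_sum]
    refine Finset.sum_le_sum fun PP _ => ?_
    rw [← mul_assoc]
    have := chaosNorm_nonneg A PP.2 PP.1
    gcongr
    rw [rpow_half (by norm_num), rpow_half hp0.le]
    have h1 : (1:ℝ) ≤ √p ^ PP.1.card := one_le_pow₀ (by rw [Real.one_le_sqrt]; exact hp)
    have h2 : √(2:ℝ) ^ PP.1.card ≤ 2 ^ (2 ^ d) := by
      calc √(2:ℝ) ^ PP.1.card ≤ 2 ^ PP.1.card := by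
            gcongr
            rw [Real.sqrt_le_left (by norm_num)]; norm_num
        _ ≤ _ := pow_le_pow_right₀ (by norm_num) (card_le_two_pow _)
    calc _ ≤ (2:ℝ) ^ (2 ^ d) * 1 := by linarith
      _ ≤ _ := by gcongr
  have h4 : EE (qA A) p Finset.univ ≤ ((CU d * ENNReal.ofReal (SS A 2)) ^ (2:ℝ)) ^ (p / 2) := by
    have : (p / 2 : ℝ) = (2 / p)⁻¹ := by field_simp
    rw [this, ENNReal.le_rpow_inv_iff (by positivity)]
    exact h3
  rw [← ENNReal.rpow_mul, mul_div_cancel₀ _ (by norm_num)] at h4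
  refine h4.trans ?_
  rw [mul_assoc]
  gcongr
  refine (ENNReal.ofReal_le_ofReal hSS).trans (le_of_eq ?_)
  rw [ENNReal.ofReal_mul (by positivity), ENNReal.ofReal_pow (by norm_num)]
  simp

lemma upper_bound (A : (Fin d → Fin n) → E) {p : ℝ} (hp : 1 ≤ p) :
    momP A p ≤ (CU d * 2 ^ (2 ^ d)).toReal * SS A p := by
  have hp0 : 0 < p := by linarith
  have h0 := SS_nonneg A hp0.le
  have hfin : CU d * 2 ^ (2 ^ d) * ENNReal.ofReal (SS A p) ≠ ⊤ := by
    have := CU_ne_top d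
    finiteness
  rw [momP_eq A hp0.le]
  rw [ENNReal.toReal_rpow]
  have h1 : EE (qA A) p Finset.univ ^ (1 / p) ≤ CU d * 2 ^ (2 ^ d) * ENNReal.ofReal (SS A p) := by
    rw [one_div, ENNReal.rpow_inv_le_iff hp0]; exact EE_le' A hp
  have h2 := ENNReal.toReal_mono hfin h1
  rwa [ENNReal.toReal_mul, ENNReal.toReal_ofReal h0] at h2

lemma EE_ne_top (A : (Fin d → Fin n) → E) {p : ℝ} (hp : 1 ≤ p) :
    EE (qA A) p Finset.univ ≠ ⊤ := by
  have := CU_ne_top d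
  exact ne_top_of_le_ne_top (by finiteness) (EE_le' A hp)

end Final

/-! ### The lower bound -/

section Lower

variable {d n : ℕ}

lemma pr_mon_eq (J : Finset (Fin d)) (a : Wt d n) (ω : Om d n) :
    pr a (mon {J} ω) = ∑ u, con J a u * ω ⟨J, u⟩ := (con_pair J a ω).symm

lemma injective_blk (J : Finset (Fin d)) :
    Function.Injective (fun u : {l // l ∈ J} → Fin n => (⟨J, u⟩ : GIdx d n)) := by
  intro u v h
  simpa using h

lemma pr_mon_lower_one (J : Finset (Fin d)) (a : Wt d n) :
    ENNReal.ofReal (Real.exp (-3)) * ENNReal.ofReal √(nrm J a) ≤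
      ∫⁻ ω, ENNReal.ofReal |pr a (mon {J} ω)| ∂(𝔤 (GIdx d n)) := by
  refine (lin_lower_one (con J a)).trans (le_of_eq ?_)
  simp_rw [pr_mon_eq]
  exact (gm_coord (injective_blk (n := n) J) (f := fun ω => ENNReal.ofReal |∑ u, con J a u * ω u|)
    (by fun_prop)).symm

lemma pr_mon_lower (J : Finset (Fin d)) (a : Wt d n) {p : ℝ} (hp : 1 ≤ p) :
    ENNReal.ofReal (Real.exp (-3) / 4 * √p) ^ p *
      (∫⁻ ω, ENNReal.ofReal |pr a (mon {J} ω)| ∂(𝔤 (GIdx d n))) ^ p ≤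
      ∫⁻ ω, ENNReal.ofReal |pr a (mon {J} ω)| ^ p ∂(𝔤 (GIdx d n)) := by
  simp_rw [pr_mon_eq]
  have h1 := gm_coord (injective_blk (n := n) J)
    (f := fun ω => ENNReal.ofReal |∑ u, con J a u * ω u|) (by fun_prop)
  have h2 := gm_coord (injective_blk (n := n) J)
    (f := fun ω => ENNReal.ofReal |∑ u, con J a u * ω u| ^ p) (by fun_prop)
  simp only at h1 h2
  rw [h1, h2]
  exact lin_lower _ hp

/-- The Gaussian average of a Hilbert norm dominates the square root of its second moment. -/
lemma sqrt_nrm_lower (k : Fin d) (I : Finset (Fin d)) (a : Wt d n) :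
    ENNReal.ofReal (Real.exp (-3)) * ENNReal.ofReal √(nrm (insert k I) a) ≤
      ∫⁻ g, ENNReal.ofReal √(nrm I (a * mon {{k}} g)) ∂(𝔤 (GIdx d n)) := by
  obtain ⟨N, hN⟩ : ∃ N, N = nrm (insert k I) a := ⟨_, rfl⟩
  rw [← hN]
  have hN0 : 0 ≤ N := hN ▸ nrm_nonneg _ _
  rcases hN0.eq_or_lt with h0 | h0
  · simp [← h0]
  -- the part of `a` on the fibre over `u`
  let b : ({l // l ∈ I} → Fin n) → Wt d n := fun u i =>
    if (fun l : {l // l ∈ I} => i l.1) = u then a i else 0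
  have hcon : ∀ m u, con I (a * m) u = pr (b u) m := by
    intro m u
    unfold con pr
    refine Finset.sum_congr rfl fun i _ => ?_
    simp only [b]
    split_ifs <;> simp
  have hsum : ∑ u, nrm {k} (b u) = N := by
    rw [hN]
    simp_rw [nrm_eq]
    rw [Finset.sum_comm]
    refine Finset.sum_congr rfl fun i _ => ?_
    rw [Finset.sum_comm]
    refine Finset.sum_congr rfl fun j _ => ?_
    rw [Finset.sum_eq_single (fun l : {l // l ∈ I} => i l.1)]
    · have : ((fun l : {l // l ∈ I} => j l.1) = fun l => i l.1) ↔ ∀ l ∈ I, i l = j l := by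
        constructor
        · intro h l hl; exact (congrFun h ⟨l, hl⟩).symm
        · intro h; ext l; rw [h _ l.2]
      simp only [b, this, Finset.mem_singleton, forall_eq, Finset.mem_insert, forall_eq_or_imp]
      by_cases h1 : i k = j k <;> by_cases h2 : ∀ l ∈ I, i l = j l <;> simp [h1, h2]
    · intro u _ hu; simp [b, Ne.symm hu]
    · simp
  have hs0 : ENNReal.ofReal √N ≠ 0 := by simpa using h0
  rw [← ENNReal.mul_le_mul_iff_right hs0 ENNReal.ofReal_ne_top]
  have hpt : ∀ g : Om d n, ∑ u, ENNReal.ofReal √(nrm {k} (b u)) *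
      ENNReal.ofReal |pr (b u) (mon {{k}} g)| ≤
      ENNReal.ofReal √N * ENNReal.ofReal √(nrm I (a * mon {{k}} g)) := by
    intro g
    simp_rw [← ENNReal.ofReal_mul (Real.sqrt_nonneg _)]
    rw [← ENNReal.ofReal_sum_of_nonneg fun u _ => by positivity]
    refine ENNReal.ofReal_le_ofReal ?_
    refine (Real.sum_mul_le_sqrt_mul_sqrt _ _ _).trans (le_of_eq ?_)
    simp_rw [Real.sq_sqrt (nrm_nonneg _ _), sq_abs]
    rw [hsum]
    simp only [nrm, hcon]
  have hmeas : ∀ u, Measurable fun g : Om d n => ENNReal.ofReal |pr (b u) (mon {{k}} g)| := fun u =>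
    (((continuous_pr (b u)).comp (continuous_mon _)).abs.measurable).ennreal_ofReal
  calc ENNReal.ofReal √N * (ENNReal.ofReal (Real.exp (-3)) * ENNReal.ofReal √N)
      = ∑ u, ENNReal.ofReal √(nrm {k} (b u)) * (ENNReal.ofReal (Real.exp (-3)) *
          ENNReal.ofReal √(nrm {k} (b u))) := by
        have e : ∀ s : ℝ, 0 ≤ s → ENNReal.ofReal √s * (ENNReal.ofReal (Real.exp (-3)) *
            ENNReal.ofReal √s) = ENNReal.ofReal (Real.exp (-3)) * ENNReal.ofReal s := by
          intro s hs
          rw [mul_left_comm, ← ENNReal.ofReal_mul (Real.sqrt_nonneg _), Real.mul_self_sqrt hs]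
        simp_rw [e _ (nrm_nonneg _ _)]
        rw [e _ hN0, ← Finset.mul_sum, ← ENNReal.ofReal_sum_of_nonneg fun u _ => nrm_nonneg _ _,
          hsum]
    _ ≤ ∑ u, ENNReal.ofReal √(nrm {k} (b u)) *
          ∫⁻ g, ENNReal.ofReal |pr (b u) (mon {{k}} g)| ∂(𝔤 (GIdx d n)) := by
        gcongr with u
        exact pr_mon_lower_one _ _
    _ = ∫⁻ g, ∑ u, ENNReal.ofReal √(nrm {k} (b u)) *
          ENNReal.ofReal |pr (b u) (mon {{k}} g)| ∂(𝔤 (GIdx d n)) := by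
        rw [lintegral_finsetSum _ fun u _ => (hmeas u).const_mul _]
        simp_rw [lintegral_const_mul _ (hmeas _)]
    _ ≤ ∫⁻ g, ENNReal.ofReal √N * ENNReal.ofReal √(nrm I (a * mon {{k}} g)) ∂(𝔤 (GIdx d n)) :=
        lintegral_mono hpt
    _ = _ := lintegral_const_mul' _ _ ENNReal.ofReal_ne_top

lemma sing_insert (k : Fin d) (I : Finset (Fin d)) : sing (insert k I) = insert {k} (sing I) := by
  simp [sing, Finset.image_insert]

lemma notMem_sing {k : Fin d} {I : Finset (Fin d)} (h : k ∉ I) : {k} ∉ sing I := by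
  simp [sing, h]

lemma measurable_pr_mon (a : Wt d n) (X : Finset (Finset (Fin d))) :
    Measurable fun g : Om d n => ENNReal.ofReal |pr a (mon X g)| :=
  (((continuous_pr a).comp (continuous_mon _)).abs.measurable).ennreal_ofReal

/-- The first moment of a scalar homogeneous chaos dominates the Hilbert–Schmidt norm. -/
lemma chaos_lower_one (I : Finset (Fin d)) : ∀ a : Wt d n,
    ENNReal.ofReal (Real.exp (-3)) ^ I.card * ENNReal.ofReal √(nrm I a) ≤
      ∫⁻ ω, ENNReal.ofReal |pr a (mon (sing I) ω)| ∂(𝔤 (GIdx d n)) := by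
  induction I using Finset.induction_on with
  | empty =>
    intro a
    have : nrm ∅ a = (∑ i, a i) ^ 2 := by
      rw [nrm_eq, sq, Finset.sum_mul_sum]; simp
    simp [sing, pr, this, Real.sqrt_sq_eq_abs]
  | insert k I hk ih =>
    intro a
    rw [← gm_splice (blk n {{k}}) (measurable_pr_mon a _), Finset.card_insert_of_notMem hk, pow_succ]
    have hk' := notMem_sing hk
    calc _ = ENNReal.ofReal (Real.exp (-3)) ^ I.card * (ENNReal.ofReal (Real.exp (-3)) *
          ENNReal.ofReal √(nrm (insert k I) a)) := by ring
      _ ≤ ENNReal.ofReal (Real.exp (-3)) ^ I.card *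
          ∫⁻ g, ENNReal.ofReal √(nrm I (a * mon {{k}} g)) ∂(𝔤 (GIdx d n)) := by
          gcongr; exact sqrt_nrm_lower k I a
      _ = ∫⁻ g, ENNReal.ofReal (Real.exp (-3)) ^ I.card *
          ENNReal.ofReal √(nrm I (a * mon {{k}} g)) ∂(𝔤 (GIdx d n)) :=
          (lintegral_const_mul' _ _ (by finiteness)).symm
      _ ≤ _ := by
          refine lintegral_mono fun g => (ih _).trans (le_of_eq (lintegral_congr fun ω => ?_))
          rw [sing_insert, mon_insert hk', mon_splice_sub (le_refl _),
            mon_splice_disj (by simpa using hk'), mul_comm (mon {{k}} g), pr_mul]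

/-- The `p`-th moment of a scalar homogeneous chaos is at least of the order `√p` times its first moment:
it is a Gaussian linear form in one of its variables, conditionally on the others. -/
lemma chaos_lower {I : Finset (Fin d)} (hI : I.Nonempty) (a : Wt d n) {p : ℝ} (hp : 1 ≤ p) :
    (ENNReal.ofReal (Real.exp (-3) / 4 * √p) *
      ∫⁻ ω, ENNReal.ofReal |pr a (mon (sing I) ω)| ∂(𝔤 (GIdx d n))) ^ p ≤
      ∫⁻ ω, ENNReal.ofReal |pr a (mon (sing I) ω)| ^ p ∂(𝔤 (GIdx d n)) := by
  have hp0 : 0 < p := by linarith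
  obtain ⟨k, hk⟩ := hI
  obtain ⟨I', hkI', rfl⟩ : ∃ I', k ∉ I' ∧ I = insert k I' :=
    ⟨I.erase k, by simp, (Finset.insert_erase hk).symm⟩
  have hk' := notMem_sing hkI'
  have hm := measurable_pr_mon a (sing (insert k I'))
  rw [← gm_splice (blk n (sing I')) hm, ← gm_splice (blk n (sing I')) (hm.pow_const p)]
  have e : ∀ ω g : Om d n, pr a (mon (sing (insert k I')) (splice (blk n (sing I')) ω g)) =
      pr (a * mon (sing I') ω) (mon {{k}} g) := by
    intro ω g
    rw [sing_insert, mon_splice_insert hk', pr_mul]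
  have hm2 : Measurable fun ω : Om d n => ∫⁻ g, ENNReal.ofReal
      |pr a (mon (sing (insert k I')) (splice (blk n (sing I')) ω g))| ∂(𝔤 (GIdx d n)) :=
    (Measurable.comp hm (measurable_splice (blk n (sing I')))).lintegral_prod_right'
  rw [ENNReal.mul_rpow_of_nonneg _ _ hp0.le]
  calc _ ≤ ENNReal.ofReal (Real.exp (-3) / 4 * √p) ^ p * ∫⁻ ω, (∫⁻ g, ENNReal.ofReal
      |pr a (mon (sing (insert k I')) (splice (blk n (sing I')) ω g))| ∂(𝔤 (GIdx d n))) ^ p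
        ∂(𝔤 (GIdx d n)) := by
        gcongr
        exact lintegral_rpow_jensen' (𝔤 (GIdx d n)) hm2.aemeasurable hp
    _ = ∫⁻ ω, ENNReal.ofReal (Real.exp (-3) / 4 * √p) ^ p * (∫⁻ g, ENNReal.ofReal
      |pr a (mon (sing (insert k I')) (splice (blk n (sing I')) ω g))| ∂(𝔤 (GIdx d n))) ^ p
        ∂(𝔤 (GIdx d n)) := (lintegral_const_mul' _ _ (by finiteness)).symm
    _ ≤ _ := by
        refine lintegral_mono fun ω => ?_
        simp_rw [e]
        exact pr_mon_lower {k} _ hp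

/-- The constant in the lower bound for a single block. -/
noncomputable def cl (d : ℕ) : ℝ := Real.exp (-3) / 4 * Real.exp (-3) ^ d

lemma cl_pos (d : ℕ) : 0 < cl d := by unfold cl; positivity

/-- Replacement of one deterministic block `I` by independent Gaussian variables: the functional attaining
`q (mon {I} x)` has Hilbert–Schmidt norm at least `q (mon {I} x)`, and the scalar chaos built from it has
`p`-th moment of at least `√p` times that norm. -/
lemma block_lower (q : Seminorm ℝ (Wt d n)) {I : Finset (Fin d)} (hI : I.Nonempty) {x : Om d n}
    (hx : x ∈ BB n {I}) {p : ℝ} (hp : 1 ≤ p) :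
    (ENNReal.ofReal (cl d * √p) * ENNReal.ofReal (q (mon {I} x))) ^ p ≤ EE q p I := by
  have hp0 : 0 < p := by linarith
  obtain ⟨t, ht, hpr⟩ := exists_TT q (mon {I} x)
  have h1 : q (mon {I} x) ≤ √(nrm I t) := by
    rw [← hpr, pr_mon_eq]
    refine (Real.sum_mul_le_sqrt_mul_sqrt _ _ _).trans ?_
    have : √(∑ u, x ⟨I, u⟩ ^ 2) ≤ 1 := by
      rw [Real.sqrt_le_left zero_le_one, one_pow]; exact hx I (Finset.mem_singleton_self I)
    exact mul_le_of_le_one_right (Real.sqrt_nonneg _) this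
  have habs : ∀ z, |pr t z| ≤ q z := by
    intro z
    rw [abs_le]
    refine ⟨?_, ht z⟩
    have h := ht (-z)
    rw [map_neg_eq_map] at h
    have : pr t (-z) = - pr t z := by simp [pr]
    linarith
  have hexp : Real.exp (-3) ≤ 1 := by rw [Real.exp_le_one_iff]; norm_num
  have hcard : I.card ≤ d := by simpa using Finset.card_le_univ I
  have h2 : ENNReal.ofReal (cl d * √p) * ENNReal.ofReal (q (mon {I} x)) ≤
      ENNReal.ofReal (Real.exp (-3) / 4 * √p) *
        ∫⁻ ω, ENNReal.ofReal |pr t (mon (sing I) ω)| ∂(𝔤 (GIdx d n)) := by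
    calc _ ≤ ENNReal.ofReal (Real.exp (-3) / 4 * √p) *
          (ENNReal.ofReal (Real.exp (-3)) ^ I.card * ENNReal.ofReal √(nrm I t)) := by
          rw [← ENNReal.ofReal_mul (mul_nonneg (cl_pos d).le (Real.sqrt_nonneg p)),
            ← ENNReal.ofReal_pow (by positivity), ← ENNReal.ofReal_mul (by positivity),
            ← ENNReal.ofReal_mul (by positivity)]
          refine ENNReal.ofReal_le_ofReal ?_
          unfold cl
          have h3 : Real.exp (-3) ^ d ≤ Real.exp (-3) ^ I.card :=
            pow_le_pow_of_le_one (by positivity) hexp hcard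
          calc Real.exp (-3) / 4 * Real.exp (-3) ^ d * √p * q (mon {I} x) =
              Real.exp (-3) / 4 * √p * (Real.exp (-3) ^ d * q (mon {I} x)) := by ring
            _ ≤ _ := by gcongr
      _ ≤ _ := by
          gcongr
          exact chaos_lower_one I t
  refine (ENNReal.rpow_le_rpow h2 hp0.le).trans ((chaos_lower hI t hp).trans ?_)
  unfold EE
  gcongr with ω
  exact habs _

lemma sing_union {S T : Finset (Fin d)} : sing (S ∪ T) = sing S ∪ sing T := by
  simp [sing, Finset.image_union]

lemma sing_disjoint {S T : Finset (Fin d)} (h : Disjoint S T) : Disjoint (sing S) (sing T) := by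
  rw [Finset.disjoint_left]
  simp only [sing, Finset.mem_image]
  rintro _ ⟨l, hl, rfl⟩ ⟨m, hm, e⟩
  rw [Finset.singleton_inj] at e
  subst e
  exact Finset.disjoint_left.1 h hl hm

/-- Replacement of the deterministic blocks by Gaussian ones, one block at a time. -/
lemma blocks_lower (q : Seminorm ℝ (Wt d n)) {p : ℝ} (hp : 1 ≤ p) (x : Om d n)
    (P : Finset (Finset (Fin d))) : (∀ I ∈ P, I.Nonempty) →
    (∀ I ∈ P, ∀ I' ∈ P, I ≠ I' → Disjoint I I') → x ∈ BB n P →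
    (ENNReal.ofReal (cl d * √p) ^ P.card) ^ p * ∫⁻ ω, ENNReal.ofReal
      (q (mon P x * mon (sing (Finset.univ \ P.sup id)) ω)) ^ p ∂(𝔤 (GIdx d n)) ≤
      EE q p Finset.univ := by
  have hp0 : 0 < p := by linarith
  induction P using Finset.induction_on with
  | empty => intro _ _ _; simp [EE]
  | insert I P hIP ih =>
    intro hne hdisj hx
    have ih' := ih (fun J hJ => hne J (Finset.mem_insert_of_mem hJ))
      (fun J hJ K hK => hdisj J (Finset.mem_insert_of_mem hJ) K (Finset.mem_insert_of_mem hK))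
      (fun J hJ => hx J (Finset.mem_insert_of_mem hJ))
    refine le_trans ?_ ih'
    have hIne := hne I (Finset.mem_insert_self _ _)
    have hxI : x ∈ BB n {I} := by
      intro J hJ
      rw [Finset.mem_singleton] at hJ
      exact hx J (hJ ▸ Finset.mem_insert_self _ _)
    obtain ⟨R, hR⟩ : ∃ R, R = Finset.univ \ (insert I P).sup id := ⟨_, rfl⟩
    have hdI : Disjoint I R := by
      rw [hR, Finset.sup_insert, Finset.disjoint_left]
      intro l hl
      simp [hl]
    have hRI : Finset.univ \ P.sup id = I ∪ R := by
      rw [hR]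
      ext l
      simp only [Finset.mem_sdiff, Finset.mem_univ, true_and, Finset.sup_insert, id_eq,
        Finset.sup_eq_union, Finset.mem_union, not_or]
      constructor
      · intro h; by_cases hl : l ∈ I
        · exact Or.inl hl
        · exact Or.inr ⟨hl, h⟩
      · rintro (hl | h)
        · intro h'
          obtain ⟨K, hK, hlK⟩ := mem_sup_id.1 h'
          refine Finset.disjoint_left.1 (hdisj I (Finset.mem_insert_self _ _) K
            (Finset.mem_insert_of_mem hK) ?_) hl hlK
          rintro rfl; exact hIP hK
        · exact h.2
    rw [← hR, hRI, Finset.card_insert_of_notMem hIP, pow_succ,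
      ENNReal.mul_rpow_of_nonneg _ _ hp0.le, mul_assoc]
    gcongr
    have hm : Measurable fun ω : Om d n => ENNReal.ofReal (q (mon P x * mon (sing (I ∪ R)) ω)) ^ p :=
      ((continuous_q_mon q _ _).measurable.ennreal_ofReal).pow_const p
    rw [← gm_splice (blk n (sing R)) hm, ← lintegral_const_mul' _ _ (by finiteness)]
    refine lintegral_mono fun ω => ?_
    have hb := block_lower (qm q (mon P x * mon (sing R) ω)) hIne hxI hp
    rw [ENNReal.mul_rpow_of_nonneg _ _ hp0.le] at hb
    refine le_trans (le_of_eq ?_) (hb.trans (le_of_eq ?_))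
    · rw [qm_apply, mon_insert hIP, mul_assoc]
    · unfold EE
      refine lintegral_congr fun g => ?_
      rw [sing_union, mon_union (sing_disjoint hdI), mon_splice_sub (le_refl _),
        mon_splice_disj (sing_disjoint hdI), qm_apply, mul_left_comm]

variable {E : Type*} [NormedAddCommGroup E] [NormedSpace ℝ E]

lemma tNorm_le (A : (Fin d → Fin n) → E) {p : ℝ} (hp : 1 ≤ p) {J : Finset (Fin d)}
    {P : Finset (Finset (Fin d))} (hP : P ∈ partitionsOf J) :
    (cl d * √p) ^ P.card * tNorm A J P ≤ momP A p := by
  have hp0 : 0 < p := by linarith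
  have hc := cl_pos d
  have hc' : 0 < (cl d * √p) ^ P.card := by positivity
  obtain ⟨hne, hdisj, hJ⟩ : IsPartition J P := by simpa [partitionsOf] using hP
  rw [mul_comm, ← le_div_iff₀ hc']
  unfold tNorm
  rw [chaosNorm_eq]
  refine csSup_le ⟨_, 0, zero_mem_BB P, rfl⟩ ?_
  rintro r ⟨x, hx, rfl⟩
  rw [le_div_iff₀ hc', momP_eq A hp0.le, ENNReal.toReal_rpow]
  have hb := blocks_lower (qA A) hp x P hne hdisj hx
  rw [hJ] at hb
  have hcont := continuous_q_mon (qA A) (mon P x) (sing (Finset.univ \ J))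
  have hj := lintegral_rpow_jensen' (𝔤 (GIdx d n))
    (hcont.measurable.ennreal_ofReal).aemeasurable hp
  have h1 : (ENNReal.ofReal (cl d * √p) ^ P.card * ∫⁻ ω, ENNReal.ofReal
      (qA A (mon P x * mon (sing (Finset.univ \ J)) ω)) ∂(𝔤 (GIdx d n))) ^ p ≤
      EE (qA A) p Finset.univ := by
    rw [ENNReal.mul_rpow_of_nonneg _ _ hp0.le]
    refine le_trans ?_ hb
    gcongr
  rw [← ENNReal.le_rpow_inv_iff hp0, ← one_div] at h1
  have h2 := ENNReal.toReal_mono (ENNReal.rpow_ne_top_of_nonneg (by positivity) (EE_ne_top A hp)) h1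
  refine le_trans (le_of_eq ?_) h2
  rw [← ofReal_integral_eq_lintegral_ofReal (integrable_q_mon _ _ _)
    (Filter.Eventually.of_forall fun _ => apply_nonneg _ _), ENNReal.toReal_mul,
    ENNReal.toReal_ofReal (integral_nonneg fun _ => apply_nonneg _ _), ENNReal.toReal_pow,
    ENNReal.toReal_ofReal (by positivity), mul_comm]
  rfl

lemma cl_le_one (d : ℕ) : cl d ≤ 1 := by
  have hexp : Real.exp (-3) ≤ 1 := by rw [Real.exp_le_one_iff]; norm_num
  have h0 := Real.exp_pos (-3)
  have h1 : Real.exp (-3) ^ d ≤ 1 := pow_le_one₀ h0.le hexp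
  unfold cl
  nlinarith

/-- A bound for the number of pairs `(J, P)` times the worst factor in `tNorm_le`. -/
noncomputable def CL (d : ℕ) : ℝ := 2 ^ d * 2 ^ (2 ^ d) * (cl d ^ (2 ^ d))⁻¹

lemma lower_bound (A : (Fin d → Fin n) → E) {p : ℝ} (hp : 1 ≤ p) :
    ∑ J : Finset (Fin d), ∑ P ∈ partitionsOf J, p ^ ((P.card : ℝ) / 2) * tNorm A J P ≤
      CL d * momP A p := by
  have hp0 : 0 < p := by linarith
  have hc := cl_pos d
  have hmom : 0 ≤ momP A p := by rw [momP_eq A hp0.le]; positivity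
  have h1 : ∀ J : Finset (Fin d), ∀ P ∈ partitionsOf J,
      p ^ ((P.card : ℝ) / 2) * tNorm A J P ≤ (cl d ^ (2 ^ d))⁻¹ * momP A p := by
    intro J P hP
    have h := tNorm_le A hp hP
    rw [mul_pow, mul_assoc] at h
    rw [rpow_half hp0.le, inv_mul_eq_div, le_div_iff₀ (by positivity), mul_comm]
    refine le_trans ?_ h
    have : 0 ≤ tNorm A J P := chaosNorm_nonneg _ _ _
    gcongr ?_ * _
    exact pow_le_pow_of_le_one hc.le (cl_le_one d) (card_le_two_pow P)
  have h2 : ∀ J : Finset (Fin d), ∑ P ∈ partitionsOf J, p ^ ((P.card : ℝ) / 2) * tNorm A J P ≤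
      2 ^ (2 ^ d) * ((cl d ^ (2 ^ d))⁻¹ * momP A p) := by
    intro J
    refine (Finset.sum_le_card_nsmul _ _ _ (h1 J)).trans ?_
    rw [nsmul_eq_mul]
    gcongr
    have : (partitionsOf J).card ≤ 2 ^ (2 ^ d) := by
      simpa using Finset.card_le_univ (partitionsOf J)
    exact_mod_cast this
  refine (Finset.sum_le_card_nsmul _ _ _ fun J _ => h2 J).trans (le_of_eq ?_)
  rw [nsmul_eq_mul]
  simp [CL]
  ring

end Lower

end

theorem gaussian_chaos_moment_two_sided (d : ℕ) (hd : 1 ≤ d) :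
    ∃ C : ℝ, 0 < C ∧
      ∀ (n : ℕ) (E : Type*) [NormedAddCommGroup E] [NormedSpace ℝ E]
        (A : (Fin d → Fin n) → E) (p : ℝ), 1 ≤ p →
        (1 / C) * (∑ J : Finset (Fin d), ∑ P ∈ partitionsOf J,
            p ^ ((P.card : ℝ) / 2) * tNorm A J P)
          ≤ momP A p ∧
        momP A p ≤ C * ∑ PP ∈ partitionPairs d,
            p ^ ((PP.1.card : ℝ) / 2) * chaosNorm A PP.2 PP.1 := by
  have hCL : 0 ≤ CL d := by
    have := (cl_pos d).le
    unfold CL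
    positivity
  have hCU : 0 ≤ (CU d * 2 ^ (2 ^ d)).toReal := ENNReal.toReal_nonneg
  refine ⟨CL d + (CU d * 2 ^ (2 ^ d)).toReal + 1, by positivity, ?_⟩
  intro n E _ _ A p hp
  have hm : 0 ≤ momP A p := by
    rw [momP_eq A (by linarith)]
    positivity
  constructor
  · rw [one_div, inv_mul_le_iff₀ (by positivity)]
    refine (lower_bound A hp).trans ?_
    gcongr
    linarith
  · refine (upper_bound A hp).trans ?_
    change _ ≤ _ * SS A p
    have hS := SS_nonneg A (p := p) (by linarith)
    gcongr
    linarith
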